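/- Let Ω ⊂ ℂ be a bounded domain containing 0 whose boundary is an analytic Jordan curve, let u be a negative continuous subharmonic exhaustion of Ω with finite Monge–Ampère mass, and let 1 ≤ p < ∞ and f ∈ H^p_u(Ω) with f ≢ 0. Then there exist an Ω-inner function I and a zero-free function h ∈ H^2_u(Ω) such that f = I·h^{2/p}. In particular, every f ∈ H^1_u(Ω) can be written as a product f = g·h with both g, h ∈ H^2_u(Ω). -/

import Mathlib

open MeasureTheory Filter Metric Complex Set
open scoped Real ENNReal Topology

noncomputable section

/-- The Laplacian of a real-valued function on `ℂ ≅ ℝ²`. -/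
def lap (φ : ℂ → ℝ) (z : ℂ) : ℝ :=
  fderiv ℝ (fun w => fderiv ℝ φ w 1) z 1 +
    fderiv ℝ (fun w => fderiv ℝ φ w Complex.I) z Complex.I

/-- `h` is harmonic on `s`. -/
def HarmonicOn (h : ℂ → ℝ) (s : Set ℂ) : Prop :=
  ContDiffOn ℝ 2 h s ∧ ∀ z ∈ s, lap h z = 0

/-- `u` is subharmonic on `s` (continuous with the sub-mean-value property). -/
def SubharmonicOn (u : ℂ → ℝ) (s : Set ℂ) : Prop :=
  ContinuousOn u s ∧ ∀ z ∈ s, ∀ r : ℝ, 0 < r → closedBall z r ⊆ s →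
    u z ≤ (2 * Real.pi)⁻¹ *
      ∫ t in (0:ℝ)..(2 * Real.pi), u (z + (r : ℂ) * Complex.exp ((t : ℂ) * Complex.I))

/-- `u` is a negative continuous subharmonic exhaustion function for `Ω`:
sublevel sets `{u < c}`, `c < 0`, are relatively compact in `Ω`. -/
structure IsExhaustion (u : ℂ → ℝ) (Ω : Set ℂ) : Prop where
  neg : ∀ z ∈ Ω, u z < 0
  subh : SubharmonicOn u Ω
  exh : ∀ c : ℝ, c < 0 → IsCompact (closure {z | z ∈ Ω ∧ u z < c}) ∧
    closure {z | z ∈ Ω ∧ u z < c} ⊆ Ω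

/-- `ν` is the Riesz measure `dd^c u = (1/4) Δu dA` of `u` on `Ω`, characterized
distributionally: `∫ φ dν = (1/4) ∫_Ω u Δφ dA` for test functions `φ`. -/
def IsRieszMeasure (u : ℂ → ℝ) (Ω : Set ℂ) (ν : Measure ℂ) : Prop :=
  ν Ωᶜ = 0 ∧
  ∀ φ : ℂ → ℝ, ContDiff ℝ 2 φ → HasCompactSupport φ → tsupport φ ⊆ Ω →
    ∫ z, φ z ∂ν = (4 : ℝ)⁻¹ * ∫ z in Ω, u z * lap φ z

/-- `μ` is the Monge–Ampère measure `μ_{u,r} = dd^c max(u,r) - χ_{Ω∖{u<r}} dd^c u`,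
where `ν = dd^c u`. -/
def IsMAMeasure (u : ℂ → ℝ) (Ω : Set ℂ) (ν : Measure ℂ) (r : ℝ) (μ : Measure ℂ) : Prop :=
  ∃ νr : Measure ℂ, IsRieszMeasure (fun z => max (u z) r) Ω νr ∧
    μ = νr - ν.restrict {z | z ∈ Ω ∧ r ≤ u z}

/-- The `p`-th power of the Poletsky–Stessin Hardy "norm",
`limsup_{r→0⁻} ∫ |f|^p dμ_{u,r}`. -/
def psNormPow (p : ℝ) (μfam : ℝ → Measure ℂ) (f : ℂ → ℂ) : ℝ≥0∞ :=
  Filter.limsup (fun r => ∫⁻ z, ENNReal.ofReal (‖f z‖ ^ p) ∂(μfam r))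
    (nhdsWithin 0 (Set.Iio 0))

/-- The Poletsky–Stessin Hardy norm. -/
def psNorm (p : ℝ) (μfam : ℝ → Measure ℂ) (f : ℂ → ℂ) : ℝ≥0∞ :=
  psNormPow p μfam f ^ (1 / p)

/-- Membership in the Poletsky–Stessin Hardy space `H^p_u(Ω)`, where `μfam r = μ_{u,r}`. -/
def MemPS (p : ℝ) (Ω : Set ℂ) (μfam : ℝ → Measure ℂ) (f : ℂ → ℂ) : Prop :=
  DifferentiableOn ℂ f Ω ∧ psNormPow p μfam f < ⊤

/-- Membership in the classical Hardy space `H^p(Ω)`: `|f|^p` has a harmonic majorant. -/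
def MemHClassical (p : ℝ) (Ω : Set ℂ) (f : ℂ → ℂ) : Prop :=
  DifferentiableOn ℂ f Ω ∧
    ∃ h : ℂ → ℝ, HarmonicOn h Ω ∧ ∀ z ∈ Ω, ‖f z‖ ^ p ≤ h z

/-- A bounded domain in `ℂ` containing `0` whose boundary is an analytic Jordan curve:
there is a conformal map of the unit disc onto `Ω` extending analytically and injectively
across the closed disc, carrying the unit circle onto the boundary of `Ω`. -/
structure AnalyticJordanDomain (Ω : Set ℂ) : Prop where
  isOpen : IsOpen Ω
  isConnected : IsConnected Ω
  isBounded : Bornology.IsBounded Ω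
  zero_mem : (0:ℂ) ∈ Ω
  analyticBoundary : ∃ (U : Set ℂ) (ψ : ℂ → ℂ), IsOpen U ∧ closedBall (0:ℂ) 1 ⊆ U ∧
    DifferentiableOn ℂ ψ U ∧ Set.InjOn ψ U ∧ ψ '' ball (0:ℂ) 1 = Ω ∧
    ψ '' sphere (0:ℂ) 1 = frontier Ω

/-- `μ` is the boundary Monge–Ampère measure: the weak* limit of the measures
`μfam r = μ_{u,r}` as `r → 0⁻`. -/
def IsBoundaryMA (μfam : ℝ → Measure ℂ) (μ : Measure ℂ) : Prop :=
  ∀ φ : ℂ → ℝ, Continuous φ →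
    Filter.Tendsto (fun r => ∫ z, φ z ∂(μfam r)) (nhdsWithin 0 (Set.Iio 0))
      (nhds (∫ z, φ z ∂μ))

/-- `f` has nontangential limit `L` at the boundary point `ξ` of `Ω`. -/
def NTLim (Ω : Set ℂ) (f : ℂ → ℂ) (ξ : ℂ) (L : ℂ) : Prop :=
  ∀ C : ℝ, 1 < C →
    Filter.Tendsto f
      (nhdsWithin ξ {z | z ∈ Ω ∧ dist z ξ ≤ C * infDist z (frontier Ω)}) (nhds L)

/-- Arc length measure on the boundary of `Ω` (1-dimensional Hausdorff measure). -/
def arcLen (Ω : Set ℂ) : Measure ℂ := (μH[1] : Measure ℂ).restrict (frontier Ω)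


/-- `ψ` is a conformal map of the unit disc onto `Ω` with `ψ 0 = 0`. -/
def IsConformalOnto (ψ : ℂ → ℂ) (Ω : Set ℂ) : Prop :=
  DifferentiableOn ℂ ψ (ball (0:ℂ) 1) ∧ Set.InjOn ψ (ball (0:ℂ) 1) ∧
    ψ '' ball (0:ℂ) 1 = Ω ∧ ψ 0 = 0

/-- `h` is `Ω`-inner: `h ∘ ψ` has unimodular nontangential boundary values a.e. on the
unit circle. -/
def OmegaInner (Ω : Set ℂ) (ψ : ℂ → ℂ) (h : ℂ → ℂ) : Prop :=
  DifferentiableOn ℂ h Ω ∧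
    ∀ᵐ ξ ∂(arcLen (ball (0:ℂ) 1)), ∃ L : ℂ,
      NTLim (ball (0:ℂ) 1) (h ∘ ψ) ξ L ∧ ‖L‖ = 1

/-- `h` is `Ω`-outer: `h ∘ ψ` is outer, i.e.
`log|h(ψ 0)| = ∫_{∂𝔻} log|(h∘ψ)*| dσ` with `σ` normalized arc length. -/
def OmegaOuter (Ω : Set ℂ) (ψ : ℂ → ℂ) (h : ℂ → ℂ) : Prop :=
  DifferentiableOn ℂ h Ω ∧
    ∃ b : ℂ → ℂ,
      (∀ᵐ ξ ∂(arcLen (ball (0:ℂ) 1)), NTLim (ball (0:ℂ) 1) (h ∘ ψ) ξ (b ξ)) ∧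
      Real.log ‖h (ψ 0)‖ =
        (2 * Real.pi)⁻¹ * ∫ ξ, Real.log ‖b ξ‖ ∂(arcLen (ball (0:ℂ) 1))


lemma lap_congr {f g : ℂ → ℝ} {z : ℂ} (h : f =ᶠ[𝓝 z] g) : lap f z = lap g z := by
  unfold lap
  have h1 : ∀ v : ℂ, (fun w => fderiv ℝ f w v) =ᶠ[𝓝 z] (fun w => fderiv ℝ g w v) := by
    intro v
    filter_upwards [h.fderiv (𝕜 := ℝ)] with w hw
    rw [hw]
  rw [(h1 1).fderiv_eq, (h1 Complex.I).fderiv_eq]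

lemma contDiff_one_dir {φ : ℂ → ℝ} (h : ContDiff ℝ 2 φ) (v : ℂ) :
    ContDiff ℝ 1 (fun w => fderiv ℝ φ w v) := by
  have : ContDiff ℝ 1 (fderiv ℝ φ) := h.fderiv_right (by norm_num)
  exact this.clm_apply contDiff_const

lemma lap_continuous {φ : ℂ → ℝ} (h : ContDiff ℝ 2 φ) : Continuous (lap φ) := by
  unfold lap
  have : ∀ v : ℂ, Continuous (fun z => fderiv ℝ (fun w => fderiv ℝ φ w v) z v) := by
    intro v
    have := (contDiff_one_dir h v).continuous_fderiv (by norm_num)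
    exact this.clm_apply continuous_const
  exact (this 1).add (this Complex.I)

lemma dir_tsupport (φ : ℂ → ℝ) (v : ℂ) : tsupport (fun w => fderiv ℝ φ w v) ⊆ tsupport φ :=
  tsupport_fderiv_apply_subset ℝ v

lemma lap_eq_zero_of_notMem {φ : ℂ → ℝ} {z : ℂ} (h : z ∉ tsupport φ) : lap φ z = 0 := by
  have : φ =ᶠ[𝓝 z] (fun _ => 0) := notMem_tsupport_iff_eventuallyEq.mp h
  rw [lap_congr this]; simp [lap]

lemma lap_compactSupport {φ : ℂ → ℝ} (h : HasCompactSupport φ) : HasCompactSupport (lap φ) := by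
  refine HasCompactSupport.intro h (fun z hz => lap_eq_zero_of_notMem hz)

lemma integral_dir_zero {g : ℂ → ℝ} (hg : ContDiff ℝ 1 g) (hc : HasCompactSupport g) (v : ℂ) :
    ∫ z, fderiv ℝ g z v = 0 := by
  have h2 : Continuous (fun z => fderiv ℝ g z v) :=
    (hg.continuous_fderiv (by norm_num)).clm_apply continuous_const
  have h3 : HasCompactSupport (fun z => fderiv ℝ g z v) := hc.fderiv_apply ℝ v
  have := integral_mul_fderiv_eq_neg_fderiv_mul_of_integrable (μ := (volume : Measure ℂ))
    (f := fun _ : ℂ => (1:ℝ)) (g := g) (v := v) (by simp)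
    (by simpa using h2.integrable_of_hasCompactSupport h3)
    (by simpa using hg.continuous.integrable_of_hasCompactSupport hc)
    (by simp) (fun x _ => hg.differentiable (by norm_num) x)
  simpa using this

lemma integral_lap_zero {φ : ℂ → ℝ} (h : ContDiff ℝ 2 φ) (hc : HasCompactSupport φ) :
    ∫ z, lap φ z = 0 := by
  unfold lap
  have A : ∀ v : ℂ, Integrable (fun z => fderiv ℝ (fun w => fderiv ℝ φ w v) z v) := by
    intro v
    have := (contDiff_one_dir h v).continuous_fderiv (by norm_num)
    exact (this.clm_apply continuous_const).integrable_of_hasCompactSupport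
      ((hc.fderiv_apply ℝ v).fderiv_apply ℝ v)
  rw [integral_add (A 1) (A _), integral_dir_zero (contDiff_one_dir h _) (hc.fderiv_apply ℝ _),
    integral_dir_zero (contDiff_one_dir h _) (hc.fderiv_apply ℝ _), add_zero]

lemma integrable_mul_lap {Ω : Set ℂ} {w : ℂ → ℝ} (hw : ContinuousOn w Ω)
    {φ : ℂ → ℝ} (h : ContDiff ℝ 2 φ) (hc : HasCompactSupport φ) (hs : tsupport φ ⊆ Ω) :
    IntegrableOn (fun z => w z * lap φ z) Ω := by
  have h1 : IntegrableOn (fun z => w z * lap φ z) (tsupport φ) :=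
    ((hw.mono hs).mul (lap_continuous h).continuousOn).integrableOn_compact hc
  have h2 : Integrable (fun z => w z * lap φ z) := by
    rw [← integrableOn_iff_integrable_of_support_subset (s := tsupport φ)]
    · exact h1
    · intro z hz
      by_contra hh
      exact hz (by simp [lap_eq_zero_of_notMem hh])
  exact h2.integrableOn

lemma exists_cutoff {K Ω : Set ℂ} (hK : IsCompact K) (hΩ : IsOpen Ω) (hKΩ : K ⊆ Ω) :
    ∃ χ : ℂ → ℝ, ContDiff ℝ 2 χ ∧ HasCompactSupport χ ∧ tsupport χ ⊆ Ω ∧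
      (∀ x ∈ K, ∀ᶠ y in 𝓝 x, χ y = 1) ∧ ∀ x, 0 ≤ χ x ∧ χ x ≤ 1 := by
  obtain ⟨L, hL, hKL, hLΩ⟩ := exists_compact_between hK hΩ hKΩ
  obtain ⟨f, h1, h0, hf⟩ := exists_contMDiffMap_one_nhds_of_subset_interior (n := 2)
    (modelWithCornersSelf ℝ ℂ) hK.isClosed hKL
  have hts : tsupport f ⊆ L := closure_minimal (fun x hx => by
    by_contra hh; exact hx (h0 x hh)) hL.isClosed
  refine ⟨f, f.contMDiff.contDiff, hL.of_isClosed_subset (isClosed_tsupport _) hts,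
    hts.trans hLΩ, ?_, fun x => hf x⟩
  intro x hx
  exact eventually_nhdsSet_iff_forall.mp h1 x hx

/-- product of cutoff and smooth function -/
lemma contDiff_cutoff_mul {Ω : Set ℂ} (hΩ : IsOpen Ω) {χ s : ℂ → ℝ} (hχ : ContDiff ℝ 2 χ)
    (hs : tsupport χ ⊆ Ω) (h : ContDiffOn ℝ 2 s Ω) : ContDiff ℝ 2 (fun z => χ z * s z) := by
  rw [contDiff_iff_contDiffAt]
  intro z
  by_cases hz : z ∈ tsupport χ
  · exact hχ.contDiffAt.mul (h.contDiffAt (hΩ.mem_nhds (hs hz)))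
  · have : (fun z => χ z * s z) =ᶠ[𝓝 z] fun _ => 0 := by
      filter_upwards [notMem_tsupport_iff_eventuallyEq.mp hz] with w hw
      simp [hw]
    exact contDiffAt_const.congr_of_eventuallyEq this

lemma tsupport_cutoff_mul {χ s : ℂ → ℝ} : tsupport (fun z => χ z * s z) ⊆ tsupport χ :=
  closure_mono (fun x hx => by
    intro h; apply hx; simp [h])

/-- Laplacian of `(|φ|²+ε)^q`. -/
lemma contDiffOn_reg {Ω : Set ℂ} (hΩ : IsOpen Ω) {φ : ℂ → ℂ} (hφ : DifferentiableOn ℂ φ Ω)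
    {ε q : ℝ} (hε : 0 < ε) : ContDiffOn ℝ 2 (fun z => (‖φ z‖ ^ 2 + ε) ^ q) Ω := by
  have h1 : ContDiffOn ℝ 2 φ Ω := (hφ.contDiffOn hΩ).restrict_scalars ℝ
  have h2 : ContDiffOn ℝ 2 (fun z => ‖φ z‖ ^ 2 + ε) Ω := (h1.norm_sq ℝ).add contDiffOn_const
  exact h2.rpow_const_of_ne (fun z _ => by positivity)

lemma hasFDerivAt_hol {φ : ℂ → ℂ} {z : ℂ} (h : DifferentiableAt ℂ φ z) :
    HasFDerivAt φ ((ContinuousLinearMap.toSpanSingleton ℂ (deriv φ z)).restrictScalars ℝ) z :=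
  h.hasDerivAt.hasFDerivAt.restrictScalars ℝ

lemma dir_reg {Ω : Set ℂ} (hΩ : IsOpen Ω) {φ : ℂ → ℂ} (hφ : DifferentiableOn ℂ φ Ω)
    {ε q : ℝ} (hε : 0 < ε) (v : ℂ) {z : ℂ} (hz : z ∈ Ω) :
    fderiv ℝ (fun z => (‖φ z‖ ^ 2 + ε) ^ q) z v
      = q * (‖φ z‖ ^ 2 + ε) ^ (q - 1) * (2 * inner ℝ (φ z) (v * deriv φ z)) := by
  have h1 := ((hasFDerivAt_hol (hφ.differentiableAt (hΩ.mem_nhds hz))).norm_sq).add_const ε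
  have h2 := h1.rpow_const (p := q) (Or.inl (by positivity))
  rw [h2.fderiv]
  simp
  left; ring

lemma dir2_reg {Ω : Set ℂ} (hΩ : IsOpen Ω) {φ : ℂ → ℂ} (hφ : DifferentiableOn ℂ φ Ω)
    {ε q : ℝ} (hε : 0 < ε) (v : ℂ) {z : ℂ} (hz : z ∈ Ω) :
    fderiv ℝ (fun w => fderiv ℝ (fun z => (‖φ z‖ ^ 2 + ε) ^ q) w v) z v
      = q * (q - 1) * (‖φ z‖ ^ 2 + ε) ^ (q - 2) * (2 * inner ℝ (φ z) (v * deriv φ z)) ^ 2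
        + q * (‖φ z‖ ^ 2 + ε) ^ (q - 1) * (2 * (‖v * deriv φ z‖ ^ 2 +
          inner ℝ (φ z) (v * v * deriv (deriv φ) z))) := by
  have hd : DifferentiableOn ℂ (deriv φ) Ω := hφ.deriv hΩ
  have h0 : (fun w => fderiv ℝ (fun z => (‖φ z‖ ^ 2 + ε) ^ q) w v) =ᶠ[𝓝 z]
      (fun z => q * (‖φ z‖ ^ 2 + ε) ^ (q - 1) * (2 * inner ℝ (φ z) (v * deriv φ z))) := by
    filter_upwards [hΩ.mem_nhds hz] with w hw
    exact dir_reg hΩ hφ hε v hw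
  rw [h0.fderiv_eq]
  have hf := hasFDerivAt_hol (hφ.differentiableAt (hΩ.mem_nhds hz))
  have hg : HasFDerivAt (fun z => v * deriv φ z) _ z :=
    (hasFDerivAt_hol (hd.differentiableAt (hΩ.mem_nhds hz))).const_mul v
  have h1 := (hf.norm_sq).add_const ε
  have h2 := (h1.rpow_const (p := q - 1) (Or.inl (by positivity))).const_mul q
  have h3 := (hf.inner ℝ hg).const_mul 2
  rw [(h2.fun_mul h3).fderiv]
  simp only [_root_.add_apply, _root_.smul_apply,
    ContinuousLinearMap.comp_apply, ContinuousLinearMap.prod_apply, fderivInnerCLM_apply,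
    ContinuousLinearMap.coe_restrictScalars', ContinuousLinearMap.toSpanSingleton_apply,
    innerSL_apply_apply, smul_eq_mul, nsmul_eq_mul]
  rw [show v * (v * deriv (deriv φ) z) = v * v * deriv (deriv φ) z by ring,
    show q - 1 - 1 = q - 2 by ring, real_inner_self_eq_norm_sq]
  push_cast
  ring

lemma lap_reg_nonneg {Ω : Set ℂ} (hΩ : IsOpen Ω) {φ : ℂ → ℂ} (hφ : DifferentiableOn ℂ φ Ω)
    {ε q : ℝ} (hε : 0 < ε) (hq : 0 ≤ q) {z : ℂ} (hz : z ∈ Ω) :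
    0 ≤ lap (fun z => (‖φ z‖ ^ 2 + ε) ^ q) z := by
  unfold lap
  rw [dir2_reg hΩ hφ hε 1 hz, dir2_reg hΩ hφ hε Complex.I hz]
  set N := ‖φ z‖ ^ 2 + ε with hN
  have hNpos : 0 < N := by positivity
  have hNe : N ^ (q - 1) = N ^ (q - 2) * N := by
    rw [← Real.rpow_add_one hNpos.ne']; ring_nf
  rw [hNe]
  have e1 : (inner ℝ (φ z) (1 * deriv φ z)) ^ 2 + (inner ℝ (φ z) (Complex.I * deriv φ z)) ^ 2
      = ‖φ z‖ ^ 2 * ‖deriv φ z‖ ^ 2 := by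
    simp only [Complex.inner, ← Complex.normSq_eq_norm_sq, Complex.normSq_apply]
    simp; ring
  have e2 : inner ℝ (φ z) (1 * 1 * deriv (deriv φ) z)
      + inner ℝ (φ z) (Complex.I * Complex.I * deriv (deriv φ) z) = 0 := by
    simp
  have e3 : ‖1 * deriv φ z‖ = ‖deriv φ z‖ := by simp
  have e4 : ‖Complex.I * deriv φ z‖ = ‖deriv φ z‖ := by simp
  rw [e3, e4]
  set a := inner ℝ (φ z) (1 * deriv φ z)
  set b := inner ℝ (φ z) (Complex.I * deriv φ z)
  set c := inner ℝ (φ z) (1 * 1 * deriv (deriv φ) z)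
  set d := inner ℝ (φ z) (Complex.I * Complex.I * deriv (deriv φ) z)
  have hP : 0 ≤ N ^ (q - 2) := Real.rpow_nonneg hNpos.le _
  have : q * (q - 1) * N ^ (q - 2) * (2 * a) ^ 2 + q * (N ^ (q - 2) * N) * (2 * (‖deriv φ z‖ ^ 2 + c))
      + (q * (q - 1) * N ^ (q - 2) * (2 * b) ^ 2 + q * (N ^ (q - 2) * N) * (2 * (‖deriv φ z‖ ^ 2 + d)))
      = 4 * q * N ^ (q - 2) * ((q - 1) * (a ^ 2 + b ^ 2) + N * ‖deriv φ z‖ ^ 2)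
        + 2 * q * (N ^ (q - 2) * N) * (c + d) := by ring
  rw [this, e1, e2, hN]
  have : (q - 1) * (‖φ z‖ ^ 2 * ‖deriv φ z‖ ^ 2) + (‖φ z‖ ^ 2 + ε) * ‖deriv φ z‖ ^ 2
     = q * (‖φ z‖ ^ 2 * ‖deriv φ z‖ ^ 2) + ε * ‖deriv φ z‖ ^ 2 := by ring
  rw [this]
  rw [← hN]
  positivity

lemma lap_quad (z : ℂ) : lap (fun z => (‖z‖ ^ 2 + 1) ^ (1:ℝ)) z = 4 := by
  unfold lap
  have h : DifferentiableOn ℂ (fun z : ℂ => z) univ := differentiableOn_id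
  rw [dir2_reg isOpen_univ h one_pos 1 (mem_univ z),
    dir2_reg isOpen_univ h one_pos Complex.I (mem_univ z)]
  simp
  norm_num


lemma le_sub_add_fin (a b : Measure ℂ) [IsFiniteMeasure a] [IsFiniteMeasure b] :
    a ≤ (a - b) + b := by
  obtain ⟨s, hs, h1, h2⟩ := hahn_decomposition a b
  have hle : b.restrict s ≤ a.restrict s := by
    refine Measure.le_iff.2 fun t ht => ?_
    rw [Measure.restrict_apply ht, Measure.restrict_apply ht]
    exact h1 _ (ht.inter hs) inter_subset_right
  have hle2 : a.restrict sᶜ ≤ b.restrict sᶜ := by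
    refine Measure.le_iff.2 fun t ht => ?_
    rw [Measure.restrict_apply ht, Measure.restrict_apply ht]
    exact h2 _ (ht.inter hs.compl) inter_subset_right
  have e : (a - b).restrict s + b.restrict s = a.restrict s := by
    rw [Measure.restrict_sub_eq_restrict_sub_restrict hs, Measure.sub_add_cancel_of_le hle]
  calc a = a.restrict s + a.restrict sᶜ := (Measure.restrict_add_restrict_compl hs).symm
    _ ≤ ((a - b).restrict s + b.restrict s) + b.restrict sᶜ := by rw [e]; gcongr
    _ = (a - b).restrict s + (b.restrict s + b.restrict sᶜ) := by rw [add_assoc]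
    _ = (a - b).restrict s + b := by rw [Measure.restrict_add_restrict_compl hs]
    _ ≤ (a - b) + b := by gcongr; exact Measure.restrict_le_self

lemma le_sub_add_restrict (a b : Measure ℂ) [IsFiniteMeasure b] {K : Set ℂ} (hK : MeasurableSet K)
    (ha : a K < ⊤) : a.restrict K ≤ (a - b).restrict K + b.restrict K := by
  have : IsFiniteMeasure (a.restrict K) := ⟨by simpa using ha⟩
  rw [Measure.restrict_sub_eq_restrict_sub_restrict hK]
  exact le_sub_add_fin _ _

/-- comparison of measures through test functions -/
lemma restrict_le_of_test {a b : Measure ℂ} {V : Set ℂ} (hV : IsOpen V)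
    (ha : ∀ K, IsCompact K → K ⊆ V → a K < ⊤) (hb : ∀ K, IsCompact K → K ⊆ V → b K < ⊤)
    (h : ∀ φ : ℂ → ℝ, ContDiff ℝ 2 φ → HasCompactSupport φ → tsupport φ ⊆ V →
      ∫ z, φ z ∂a = ∫ z, φ z ∂b) : a.restrict V ≤ b.restrict V := by
  -- compact versus open
  have h1 : ∀ K O : Set ℂ, IsCompact K → IsOpen O → K ⊆ O → O ⊆ V → a K ≤ b O := by
    intro K O hK hO hKO hOV
    obtain ⟨χ, c1, c2, c3, c4, c5⟩ := exists_cutoff hK hO hKO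
    have hint : ∀ m : Measure ℂ, m (tsupport χ) < ⊤ → Integrable χ m := by
      intro m hm
      rw [← integrableOn_iff_integrable_of_support_subset (subset_tsupport χ)]
      exact c1.continuous.continuousOn.integrableOn_of_subset_isCompact c2
        (isClosed_tsupport χ).measurableSet Subset.rfl hm.ne
    have e := h χ c1 c2 (c3.trans hOV)
    have i1 := hint a (ha _ c2 (c3.trans hOV))
    have i2 := hint b (hb _ c2 (c3.trans hOV))
    have f1 := ofReal_integral_eq_lintegral_ofReal i1 (Eventually.of_forall fun x => (c5 x).1)
    have f2 := ofReal_integral_eq_lintegral_ofReal i2 (Eventually.of_forall fun x => (c5 x).1)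
    calc a K = ∫⁻ z in K, 1 ∂a := by simp
      _ = ∫⁻ z in K, ENNReal.ofReal (χ z) ∂a := by
          refine setLIntegral_congr_fun hK.measurableSet fun z hz => ?_
          simp [(c4 z hz).self_of_nhds]
      _ ≤ ∫⁻ z, ENNReal.ofReal (χ z) ∂a := setLIntegral_le_lintegral _ _
      _ = ∫⁻ z, ENNReal.ofReal (χ z) ∂b := by rw [← f1, ← f2, e]
      _ = ∫⁻ z in O, ENNReal.ofReal (χ z) ∂b := by
          rw [setLIntegral_eq_of_support_subset]
          intro z hz
          apply c3
          apply subset_tsupport χ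
          intro h0; apply hz; simp [h0]
      _ ≤ ∫⁻ z in O, 1 ∂b := by
          refine lintegral_mono fun z => ?_
          simpa using (c5 z).2
      _ = b O := by simp
  -- compact
  have h2 : ∀ K : Set ℂ, IsCompact K → K ⊆ V → a K ≤ b K := by
    intro K hK hKV
    obtain ⟨L, hL, hKL, hLV⟩ := exists_compact_between hK hV hKV
    have : IsFiniteMeasure (b.restrict L) := ⟨by simpa using hb L hL hLV⟩
    have : b K = (b.restrict L) K := by
      rw [Measure.restrict_apply hK.measurableSet,
        inter_eq_self_of_subset_left (hKL.trans interior_subset)]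
    rw [this]
    refine le_of_forall_gt fun c hc => ?_
    obtain ⟨O, hKO, hO, hOc⟩ := K.exists_isOpen_lt_of_lt c hc
    calc a K ≤ b (O ∩ interior L) := h1 K _ hK (hO.inter isOpen_interior) (subset_inter hKO hKL)
          (inter_subset_right.trans (interior_subset.trans hLV))
      _ ≤ (b.restrict L) O := by
          rw [Measure.restrict_apply hO.measurableSet]
          exact measure_mono (inter_subset_inter_right _ interior_subset)
      _ < c := hOc
  -- Borel in compact
  have h3 : ∀ (E L : Set ℂ), MeasurableSet E → IsCompact L → E ⊆ L → L ⊆ V → a E ≤ b E := by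
    intro E L hE hL hEL hLV
    have : IsFiniteMeasure (a.restrict L) := ⟨by simpa using ha L hL hLV⟩
    have : a E = (a.restrict L) E := by
      rw [Measure.restrict_apply hE, inter_eq_self_of_subset_left hEL]
    rw [this]
    refine le_of_forall_lt fun c hc => ?_
    obtain ⟨K, hKE, hK, hcK⟩ := hE.exists_lt_isCompact hc
    calc c < (a.restrict L) K := hcK
      _ ≤ a K := Measure.restrict_le_self _
      _ ≤ b K := h2 K hK (hKE.trans (hEL.trans hLV))
      _ ≤ b E := measure_mono hKE
  obtain ⟨F, hF1, hF2, hF3, hF4⟩ := hV.exists_iUnion_isClosed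
  refine Measure.le_iff.2 fun E hE => ?_
  rw [Measure.restrict_apply hE, Measure.restrict_apply hE]
  have hU : E ∩ V = ⋃ n, E ∩ (F n ∩ closedBall 0 n) := by
    ext z
    constructor
    · rintro ⟨h, hz⟩
      rw [← hF3, mem_iUnion] at hz
      obtain ⟨m, hm⟩ := hz
      obtain ⟨k, hk⟩ := exists_nat_ge ‖z‖
      refine mem_iUnion.2 ⟨max m k, h, hF4 (le_max_left _ _) hm, ?_⟩
      rw [mem_closedBall_zero_iff]
      exact hk.trans (by exact_mod_cast le_max_right _ _)
    · intro h
      obtain ⟨n, h, h', -⟩ := mem_iUnion.1 h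
      exact ⟨h, hF2 n h'⟩
  have hmono : Monotone fun n : ℕ => E ∩ (F n ∩ closedBall 0 n) := by
    intro m n hmn
    exact inter_subset_inter_right _ (inter_subset_inter (hF4 hmn)
      (closedBall_subset_closedBall (by exact_mod_cast hmn)))
  rw [hU, hmono.measure_iUnion, hmono.measure_iUnion]
  refine iSup_mono fun n => ?_
  have hc : IsCompact (F n ∩ closedBall (0:ℂ) n) := (isCompact_closedBall _ _).inter_left (hF1 n)
  exact h3 _ _ (hE.inter hc.measurableSet) hc inter_subset_right (inter_subset_left.trans (hF2 n))


lemma test_integrable {m : Measure ℂ} {φ : ℂ → ℝ} (h : Continuous φ) (hc : HasCompactSupport φ)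
    (hm : m (tsupport φ) < ⊤) : Integrable φ m := by
  rw [← integrableOn_iff_integrable_of_support_subset (subset_tsupport φ)]
  exact h.continuousOn.integrableOn_of_subset_isCompact hc
    (isClosed_tsupport φ).measurableSet Subset.rfl hm.ne

lemma riesz_diff {Ω : Set ℂ} {w1 w2 : ℂ → ℝ} (h1 : ContinuousOn w1 Ω)
    (h2 : ContinuousOn w2 Ω) {n1 n2 : Measure ℂ} (r1 : IsRieszMeasure w1 Ω n1)
    (r2 : IsRieszMeasure w2 Ω n2) {φ : ℂ → ℝ} (hφ : ContDiff ℝ 2 φ) (hc : HasCompactSupport φ)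
    (hs : tsupport φ ⊆ Ω) :
    ∫ z, φ z ∂n1 - ∫ z, φ z ∂n2 = (4:ℝ)⁻¹ * ∫ z in Ω, (w1 z - w2 z) * lap φ z := by
  rw [r1.2 φ hφ hc hs, r2.2 φ hφ hc hs, ← mul_sub,
    ← integral_sub (integrable_mul_lap h1 hφ hc hs) (integrable_mul_lap h2 hφ hc hs)]
  simp_rw [sub_mul]

lemma max_cont {Ω : Set ℂ} {u : ℂ → ℝ} (h : ContinuousOn u Ω) (r : ℝ) :
    ContinuousOn (fun z => max (u z) r) Ω := h.sup continuousOn_const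

lemma lap_cutoff {χ s : ℂ → ℝ} {z : ℂ} (h : ∀ᶠ y in 𝓝 z, χ y = 1) :
    lap (fun z => χ z * s z) z = lap s z := by
  apply lap_congr
  filter_upwards [h] with y hy
  simp [hy]

lemma isOpen_sub {Ω : Set ℂ} (hΩ : IsOpen Ω) {u : ℂ → ℝ} (h : ContinuousOn u Ω) (r : ℝ) :
    IsOpen {z | z ∈ Ω ∧ u z < r} := h.isOpen_inter_preimage hΩ isOpen_Iio

lemma isOpen_superlvl {Ω : Set ℂ} (hΩ : IsOpen Ω) {u : ℂ → ℝ} (h : ContinuousOn u Ω) (r : ℝ) :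
    IsOpen {z | z ∈ Ω ∧ r < u z} := h.isOpen_inter_preimage hΩ isOpen_Ioi

lemma meas_ge {Ω : Set ℂ} (hΩ : IsOpen Ω) {u : ℂ → ℝ} (h : ContinuousOn u Ω) (r : ℝ) :
    MeasurableSet {z | z ∈ Ω ∧ r ≤ u z} := by
  have : {z | z ∈ Ω ∧ r ≤ u z} = Ω \ {z | z ∈ Ω ∧ u z < r} := by
    ext z; simp
  rw [this]
  exact hΩ.measurableSet.diff (isOpen_sub hΩ h r).measurableSet

lemma meas_le {Ω : Set ℂ} (hΩ : IsOpen Ω) {u : ℂ → ℝ} (h : ContinuousOn u Ω) (r : ℝ) :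
    MeasurableSet {z | z ∈ Ω ∧ u z ≤ r} := by
  have : {z | z ∈ Ω ∧ u z ≤ r} = Ω \ {z | z ∈ Ω ∧ r < u z} := by
    ext z; simp
  rw [this]
  exact hΩ.measurableSet.diff (isOpen_superlvl hΩ h r).measurableSet

lemma key_quad {Ω : Set ℂ} (hΩ : IsOpen Ω) {u : ℂ → ℝ} (hu : IsExhaustion u Ω)
    {ν : Measure ℂ} (hν : IsRieszMeasure u Ω ν) {r : ℝ} (hr : r < 0) {z0 : ℂ} (hz0 : z0 ∈ Ω)
    (hz0r : u z0 < r) {νr : Measure ℂ} (hνr : IsRieszMeasure (fun z => max (u z) r) Ω νr)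
    {K : Set ℂ} (hK : IsCompact K) (hKΩ : K ⊆ Ω) :
    ∃ φ : ℂ → ℝ, Continuous φ ∧ HasCompactSupport φ ∧ tsupport φ ⊆ Ω ∧ (∀ z, 0 ≤ φ z) ∧
      (∀ z ∈ K, 1 ≤ φ z) ∧ Integrable φ νr ∧ ∫ z, φ z ∂ν < ∫ z, φ z ∂νr := by
  have hcu := hu.subh.1
  obtain ⟨e1, e2⟩ := hu.exh r hr
  obtain ⟨χ, c1, c2, c3, c4, c5⟩ := exists_cutoff (hK.union e1) hΩ (union_subset hKΩ e2)
  set s : ℂ → ℝ := fun z => (‖z‖ ^ 2 + 1) ^ (1:ℝ) with hs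
  have hs1 : ∀ z, 1 ≤ s z := fun z => by simp [hs]
  set φ : ℂ → ℝ := fun z => χ z * s z with hφ
  have hsC : ContDiffOn ℝ 2 s Ω := contDiffOn_reg hΩ (φ := fun z => z) differentiableOn_id one_pos
  have hφC : ContDiff ℝ 2 φ := contDiff_cutoff_mul hΩ c1 c3 hsC
  have hts : tsupport φ ⊆ tsupport χ := tsupport_cutoff_mul
  have hφc : HasCompactSupport φ := c2.of_isClosed_subset (isClosed_tsupport _) hts
  have hφ0 : ∀ z, 0 ≤ φ z := fun z => mul_nonneg (c5 z).1 (zero_le_one.trans (hs1 z))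
  have hd := riesz_diff (max_cont hcu r) hcu hνr hν hφC hφc (hts.trans c3)
  have hpos : 0 < ∫ z in Ω, (max (u z) r - u z) * lap φ z := by
    have hl : ∀ z ∈ Ω, u z < r → lap φ z = 4 := by
      intro z hz hzr
      rw [lap_cutoff (c4 z (Or.inr (subset_closure ⟨hz, hzr⟩))), lap_quad]
    have hnn : ∀ z ∈ Ω, 0 ≤ (max (u z) r - u z) * lap φ z := by
      intro z hz
      rcases lt_or_ge (u z) r with h | h
      · rw [hl z hz h]
        have := le_max_left (u z) r
        nlinarith
      · simp [max_eq_left h]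
    rw [setIntegral_pos_iff_support_of_nonneg_ae]
    · refine lt_of_lt_of_le ((isOpen_sub hΩ hcu r).measure_pos volume ⟨z0, hz0, hz0r⟩)
        (measure_mono ?_)
      rintro z ⟨hz, hzr⟩
      refine ⟨?_, hz⟩
      simp only [Function.mem_support]
      rw [hl z hz hzr, max_eq_right hzr.le]
      have : 0 < r - u z := by linarith
      positivity
    · exact (ae_restrict_iff' hΩ.measurableSet).2 (Eventually.of_forall hnn)
    · exact integrable_mul_lap ((max_cont hcu r).sub hcu) hφC hφc (hts.trans c3)
  have hlt : ∫ z, φ z ∂ν < ∫ z, φ z ∂νr := by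
    have : 0 < ∫ z, φ z ∂νr - ∫ z, φ z ∂ν := by rw [hd]; positivity
    linarith
  refine ⟨φ, hφC.continuous, hφc, hts.trans c3, hφ0, ?_, ?_, hlt⟩
  · intro z hz
    have : χ z = 1 := (c4 z (Or.inl hz)).self_of_nhds
    simp only [hφ, this, one_mul]; exact hs1 z
  · by_contra hni
    rw [integral_undef hni] at hlt
    exact absurd (integral_nonneg hφ0 : 0 ≤ ∫ z, φ z ∂ν) (not_le.2 hlt)

lemma locfin {Ω : Set ℂ} (hΩ : IsOpen Ω) {u : ℂ → ℝ} (hu : IsExhaustion u Ω)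
    {ν : Measure ℂ} (hν : IsRieszMeasure u Ω ν) {r : ℝ} (hr : r < 0) {z0 : ℂ} (hz0 : z0 ∈ Ω)
    (hz0r : u z0 < r) {νr : Measure ℂ} (hνr : IsRieszMeasure (fun z => max (u z) r) Ω νr)
    {K : Set ℂ} (hK : IsCompact K) (hKΩ : K ⊆ Ω) : νr K < ⊤ := by
  obtain ⟨φ, -, -, -, h0, h1, hi, -⟩ := key_quad hΩ hu hν hr hz0 hz0r hνr hK hKΩ
  have := hi.lintegral_lt_top
  refine lt_of_le_of_lt ?_ this
  calc νr K = ∫⁻ z in K, 1 ∂νr := by simp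
    _ ≤ ∫⁻ z in K, ENNReal.ofReal (φ z) ∂νr := by
        refine setLIntegral_mono' hK.measurableSet fun z hz => ?_
        simpa using h1 z hz
    _ ≤ _ := setLIntegral_le_lintegral _ _

/-- `νr` vanishes on `{u < r}`, and agrees with `ν` on `{u > r}`. -/
lemma riesz_parts {Ω : Set ℂ} (hΩ : IsOpen Ω) {u : ℂ → ℝ} (hu : IsExhaustion u Ω)
    {ν : Measure ℂ} (hν : IsRieszMeasure u Ω ν) (hfin : ν univ < ⊤) {r : ℝ} (hr : r < 0) {z0 : ℂ}
    (hz0 : z0 ∈ Ω)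
    (hz0r : u z0 < r) {νr : Measure ℂ} (hνr : IsRieszMeasure (fun z => max (u z) r) Ω νr) :
    νr {z | z ∈ Ω ∧ u z < r} = 0 ∧
      νr.restrict {z | z ∈ Ω ∧ r < u z} = ν.restrict {z | z ∈ Ω ∧ r < u z} := by
  have hcu := hu.subh.1
  have hlf := fun K hK hKΩ => locfin hΩ hu hν hr hz0 hz0r hνr (K := K) hK hKΩ
  have hνf : ∀ K, ν K < ⊤ := fun K => lt_of_le_of_lt (measure_mono (subset_univ K)) hfin
  constructor
  · have := restrict_le_of_test (a := νr) (b := 0) (isOpen_sub hΩ hcu r)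
      (fun K hK h => hlf K hK (h.trans fun z hz => hz.1)) (fun K _ _ => by simp) ?_
    · have h2 := this univ
      simpa using h2
    · intro φ h1 h2 h3
      rw [hνr.2 φ h1 h2 (h3.trans fun z hz => hz.1)]
      have e : ∀ z, max (u z) r * lap φ z = r * lap φ z := by
        intro z
        by_cases hz : z ∈ tsupport φ
        · rw [max_eq_right (h3 hz).2.le]
        · simp [lap_eq_zero_of_notMem hz]
      simp_rw [e]
      rw [integral_const_mul, setIntegral_eq_integral_of_forall_compl_eq_zero, integral_lap_zero h1 h2]
      · simp
      · intro z hz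
        exact lap_eq_zero_of_notMem fun h => hz (h3 h).1
  · have key : ∀ φ : ℂ → ℝ, ContDiff ℝ 2 φ → HasCompactSupport φ →
        tsupport φ ⊆ {z | z ∈ Ω ∧ r < u z} → ∫ z, φ z ∂νr = ∫ z, φ z ∂ν := by
      intro φ h1 h2 h3
      have hs : tsupport φ ⊆ Ω := h3.trans fun z hz => hz.1
      rw [hνr.2 φ h1 h2 hs, hν.2 φ h1 h2 hs]
      congr 2
      ext z
      by_cases hz : z ∈ tsupport φ
      · show max (u z) r * lap φ z = u z * lap φ z
        rw [max_eq_left (h3 hz).2.le]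
      · simp [lap_eq_zero_of_notMem hz]
    apply le_antisymm
    · exact restrict_le_of_test (isOpen_superlvl hΩ hcu r)
        (fun K hK h => hlf K hK (h.trans fun z hz => hz.1)) (fun K _ _ => hνf K) key
    · exact restrict_le_of_test (isOpen_superlvl hΩ hcu r) (fun K _ _ => hνf K)
        (fun K hK h => hlf K hK (h.trans fun z hz => hz.1)) (fun φ a b c => (key φ a b c).symm)

lemma mu_supp {Ω : Set ℂ} (hΩ : IsOpen Ω) {u : ℂ → ℝ} (hu : IsExhaustion u Ω)
    {ν : Measure ℂ} (hν : IsRieszMeasure u Ω ν) (hfin : ν univ < ⊤) {r : ℝ} (hr : r < 0) {z0 : ℂ}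
    (hz0 : z0 ∈ Ω) (hz0r : u z0 < r) {μ : Measure ℂ} (hμ : IsMAMeasure u Ω ν r μ) :
    ∀ᵐ z ∂μ, z ∈ Ω ∧ u z = r := by
  obtain ⟨νr, hνr, rfl⟩ := hμ
  have hcu := hu.subh.1
  obtain ⟨p1, p2⟩ := riesz_parts hΩ hu hν hfin hr hz0 hz0r hνr
  set m := νr - ν.restrict {z | z ∈ Ω ∧ r ≤ u z} with hm
  have hle : m ≤ νr := Measure.sub_le
  have a1 : m Ωᶜ = 0 := le_antisymm ((hle _).trans hνr.1.le) zero_le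
  have a2 : m {z | z ∈ Ω ∧ u z < r} = 0 := le_antisymm ((hle _).trans p1.le) zero_le
  have a3 : m {z | z ∈ Ω ∧ r < u z} = 0 := by
    refine Measure.sub_apply_eq_zero_of_restrict_le_restrict ?_ (isOpen_superlvl hΩ hcu r).measurableSet
    rw [Measure.restrict_restrict (isOpen_superlvl hΩ hcu r).measurableSet, p2]
    have : {z | z ∈ Ω ∧ r < u z} ∩ {z | z ∈ Ω ∧ r ≤ u z} = {z | z ∈ Ω ∧ r < u z} :=
      inter_eq_self_of_subset_left fun z hz => ⟨hz.1, hz.2.le⟩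
    rw [this]
  rw [ae_iff]
  refine measure_mono_null ?_ (measure_union_null a1 (measure_union_null a2 a3))
  intro z hz
  by_cases h : z ∈ Ω
  · rcases lt_trichotomy (u z) r with h' | h' | h'
    · exact Or.inr (Or.inl ⟨h, h'⟩)
    · exact absurd ⟨h, h'⟩ hz
    · exact Or.inr (Or.inr ⟨h, h'⟩)
  · exact Or.inl h

lemma mu_pos {Ω : Set ℂ} (hΩ : IsOpen Ω) {u : ℂ → ℝ} (hu : IsExhaustion u Ω)
    {ν : Measure ℂ} (hν : IsRieszMeasure u Ω ν) (hfin : ν univ < ⊤) {r : ℝ} (hr : r < 0) {z0 : ℂ}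
    (hz0 : z0 ∈ Ω) (hz0r : u z0 < r) {μ : Measure ℂ} (hμ : IsMAMeasure u Ω ν r μ) :
    ∃ K, IsCompact K ∧ K ⊆ Ω ∧ 0 < μ K := by
  obtain ⟨νr, hνr, rfl⟩ := hμ
  have : IsFiniteMeasure ν := ⟨hfin⟩
  obtain ⟨φ, c, cs, ts, h0, -, hi, hlt⟩ := key_quad hΩ hu hν hr hz0 hz0r hνr isCompact_empty
    (empty_subset _)
  refine ⟨tsupport φ, cs, ts, pos_iff_ne_zero.2 fun h => ?_⟩
  have hK : MeasurableSet (tsupport φ) := (isClosed_tsupport φ).measurableSet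
  have hle := le_sub_add_restrict νr (ν.restrict {z | z ∈ Ω ∧ r ≤ u z}) hK
    (locfin hΩ hu hν hr hz0 hz0r hνr cs ts)
  rw [Measure.restrict_eq_zero.2 h, zero_add] at hle
  have hle2 : νr.restrict (tsupport φ) ≤ ν :=
    hle.trans (Measure.restrict_le_self.trans Measure.restrict_le_self)
  have : ∫ z, φ z ∂νr ≤ ∫ z, φ z ∂ν := by
    rw [← setIntegral_eq_integral_of_forall_compl_eq_zero (s := tsupport φ) (μ := νr)
      (fun z hz => image_eq_zero_of_notMem_tsupport hz)]
    exact integral_mono_measure hle2 (Eventually.of_forall h0)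
      (test_integrable c cs (measure_lt_top _ _))
  linarith


lemma mono_eps {Ω : Set ℂ} (hΩ : IsOpen Ω) {u : ℂ → ℝ} (hu : IsExhaustion u Ω)
    {ν : Measure ℂ} (hν : IsRieszMeasure u Ω ν) (hfin : ν univ < ⊤) {r R : ℝ} (hrR : r < R)
    (hR : R < 0) {z0 : ℂ}
    (hz0 : z0 ∈ Ω) (hz0r : u z0 < r) {μr μR : Measure ℂ} (hμr : IsMAMeasure u Ω ν r μr)
    (hμR : IsMAMeasure u Ω ν R μR) {φ : ℂ → ℂ} (hφ : DifferentiableOn ℂ φ Ω) {ε q : ℝ}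
    (hε : 0 < ε) (hq : 0 ≤ q) :
    ∫⁻ z, ENNReal.ofReal ((‖φ z‖ ^ 2 + ε) ^ q) ∂μr ≤
      ∫⁻ z, ENNReal.ofReal ((‖φ z‖ ^ 2 + ε) ^ q) ∂μR ∧
    ∫⁻ z, ENNReal.ofReal ((‖φ z‖ ^ 2 + ε) ^ q) ∂μr < ⊤ := by
  have : IsFiniteMeasure ν := ⟨hfin⟩
  have suppr := mu_supp hΩ hu hν hfin (hrR.trans hR) hz0 hz0r hμr
  obtain ⟨νr, hνr, rfl⟩ := hμr
  obtain ⟨νR, hνR, rfl⟩ := hμR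
  have hcu := hu.subh.1
  have hr : r < 0 := hrR.trans hR
  obtain ⟨e1, e2⟩ := hu.exh (R / 2) (by linarith)
  obtain ⟨χ, c1, c2, c3, c4, c5⟩ := exists_cutoff e1 hΩ e2
  set s : ℂ → ℝ := fun z => (‖φ z‖ ^ 2 + ε) ^ q with hs
  have hs0 : ∀ z, 0 ≤ s z := fun z => by positivity
  set g : ℂ → ℝ := fun z => χ z * s z with hg
  have hsC : ContDiffOn ℝ 2 s Ω := contDiffOn_reg hΩ hφ hε
  have hgC : ContDiff ℝ 2 g := contDiff_cutoff_mul hΩ c1 c3 hsC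
  have hts : tsupport g ⊆ tsupport χ := tsupport_cutoff_mul
  have hgc : HasCompactSupport g := c2.of_isClosed_subset (isClosed_tsupport _) hts
  have hg0 : ∀ z, 0 ≤ g z := fun z => mul_nonneg (c5 z).1 (hs0 z)
  set S : ℂ → ℝ≥0∞ := fun z => ENNReal.ofReal (s z) with hS
  set G : ℂ → ℝ≥0∞ := fun z => ENNReal.ofReal (g z) with hG
  have hGm : Measurable G := ENNReal.measurable_ofReal.comp hgC.continuous.measurable
  have hGS : ∀ z, G z ≤ S z := fun z =>
    ENNReal.ofReal_le_ofReal (mul_le_of_le_one_left (hs0 z) (c5 z).2)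
  have hGSe : ∀ z ∈ Ω, u z < R / 2 → G z = S z := by
    intro z hz hzu
    have : χ z = 1 := (c4 z (subset_closure ⟨hz, hzu⟩)).self_of_nhds
    simp [hG, hS, hg, this]
  have hlr := locfin hΩ hu hν hr hz0 hz0r hνr hgc (hts.trans c3)
  have hlR := locfin hΩ hu hν hR hz0 (hz0r.trans hrR) hνR hgc (hts.trans c3)
  have hir := test_integrable hgC.continuous hgc hlr
  have hiR := test_integrable hgC.continuous hgc hlR
  have hiν := test_integrable hgC.continuous hgc (measure_lt_top ν _)
  have hd := riesz_diff (max_cont hcu R) (max_cont hcu r) hνR hνr hgC hgc (hts.trans c3)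
  have hnn : 0 ≤ ∫ z in Ω, (max (u z) R - max (u z) r) * lap g z := by
    refine setIntegral_nonneg hΩ.measurableSet fun z hz => ?_
    rcases lt_or_ge (u z) R with h | h
    · rw [lap_cutoff (c4 z (subset_closure ⟨hz, by linarith⟩))]
      exact mul_nonneg (sub_nonneg.2 (max_le_max le_rfl hrR.le)) (lap_reg_nonneg hΩ hφ hε hq hz)
    · simp [max_eq_left h, max_eq_left (hrR.le.trans h)]
  have h1 : ∫⁻ z, G z ∂νr ≤ ∫⁻ z, G z ∂νR := by
    rw [← ofReal_integral_eq_lintegral_ofReal hir (Eventually.of_forall hg0),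
      ← ofReal_integral_eq_lintegral_ofReal hiR (Eventually.of_forall hg0)]
    apply ENNReal.ofReal_le_ofReal
    have : 0 ≤ ∫ z, g z ∂νR - ∫ z, g z ∂νr := by rw [hd]; positivity
    linarith
  set A := {z | z ∈ Ω ∧ u z ≤ r}
  set V := {z | z ∈ Ω ∧ r < u z}
  have hA : MeasurableSet A := meas_le hΩ hcu r
  have hV : MeasurableSet V := (isOpen_superlvl hΩ hcu r).measurableSet
  have hAV : Disjoint A V := by
    rw [Set.disjoint_left]; rintro z ⟨_, h⟩ ⟨_, h'⟩; linarith
  have h2 : ∫⁻ z, G z ∂νR ≤ ∫⁻ z, G z ∂(νR - ν.restrict {z | z ∈ Ω ∧ R ≤ u z}) +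
      ∫⁻ z in V, G z ∂ν := by
    have hT : MeasurableSet (tsupport g) := (isClosed_tsupport g).measurableSet
    rw [← setLIntegral_eq_of_support_subset (s := tsupport g) (μ := νR) (f := G)]
    · refine (lintegral_mono' (le_sub_add_restrict νR (ν.restrict {z | z ∈ Ω ∧ R ≤ u z}) hT hlR)
        le_rfl).trans ?_
      rw [lintegral_add_measure]
      refine add_le_add (setLIntegral_le_lintegral _ _) ?_
      refine (setLIntegral_le_lintegral _ _).trans ?_
      exact lintegral_mono_set fun z hz => ⟨hz.1, hrR.trans_le hz.2⟩
    · intro z hz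
      by_contra h
      exact hz (by simp [hG, image_eq_zero_of_notMem_tsupport h])
  have p2 := (riesz_parts hΩ hu hν hfin hr hz0 hz0r hνr).2
  have h3 : ∫⁻ z in A, G z ∂νr + ∫⁻ z in V, G z ∂ν ≤ ∫⁻ z, G z ∂νr := by
    rw [← p2, ← lintegral_union hV hAV]
    exact setLIntegral_le_lintegral _ _
  have h4 : ∫⁻ z, S z ∂(νr - ν.restrict {z | z ∈ Ω ∧ r ≤ u z}) ≤ ∫⁻ z in A, G z ∂νr := by
    rw [lintegral_congr_ae (g := A.indicator G), lintegral_indicator hA]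
    · exact lintegral_mono' (Measure.restrict_mono le_rfl Measure.sub_le) le_rfl
    · filter_upwards [suppr] with z hz
      rw [indicator_of_mem (show z ∈ A from ⟨hz.1, hz.2.le⟩),
        hGSe z hz.1 (by rw [hz.2]; linarith)]
  have h5 : ∫⁻ z in V, G z ∂ν ≠ ⊤ :=
    ((setLIntegral_le_lintegral _ _).trans_lt hiν.lintegral_lt_top).ne
  have h6 : ∫⁻ z in A, G z ∂νr < ⊤ :=
    (setLIntegral_le_lintegral _ _).trans_lt hir.lintegral_lt_top
  refine ⟨?_, h4.trans_lt h6⟩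
  refine h4.trans ((ENNReal.le_of_add_le_add_right h5 (h3.trans (h1.trans h2))).trans ?_)
  exact lintegral_mono hGS

lemma mono_ps {Ω : Set ℂ} (hΩ : IsOpen Ω) {u : ℂ → ℝ} (hu : IsExhaustion u Ω)
    {ν : Measure ℂ} (hν : IsRieszMeasure u Ω ν) (hfin : ν univ < ⊤)
    {μfam : ℝ → Measure ℂ} (hμ : ∀ r : ℝ, r < 0 → IsMAMeasure u Ω ν r (μfam r))
    {r R : ℝ} (hrR : r < R) (hR : R < 0) {z0 : ℂ}
    (hz0 : z0 ∈ Ω) (hz0r : u z0 < r)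
    {φ : ℂ → ℂ} (hφ : DifferentiableOn ℂ φ Ω) {p : ℝ} (hp : 0 < p) :
    ∫⁻ z, ENNReal.ofReal (‖φ z‖ ^ p) ∂(μfam r) ≤ ∫⁻ z, ENNReal.ofReal (‖φ z‖ ^ p) ∂(μfam R) := by
  have hq : 0 < p / 2 := by positivity
  have e : ∀ z, ‖φ z‖ ^ p = (‖φ z‖ ^ 2 + 0) ^ (p / 2) := by
    intro z
    rw [add_zero, ← Real.rpow_natCast, ← Real.rpow_mul (norm_nonneg _)]
    congr 1; push_cast; ring
  have hε : ∀ n : ℕ, (0:ℝ) < 1 / ((n:ℝ) + 1) := fun n => Nat.one_div_pos_of_nat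
  have key : ∀ n : ℕ, ∫⁻ z, ENNReal.ofReal (‖φ z‖ ^ p) ∂(μfam r) ≤
      ∫⁻ z, ENNReal.ofReal ((‖φ z‖ ^ 2 + 1 / ((n:ℝ) + 1)) ^ (p / 2)) ∂(μfam R) := by
    intro n
    refine le_trans (lintegral_mono fun z => ENNReal.ofReal_le_ofReal ?_)
      (mono_eps hΩ hu hν hfin hrR hR hz0 hz0r (hμ r (hrR.trans hR)) (hμ R hR) hφ (hε n) hq.le).1
    rw [e]
    exact Real.rpow_le_rpow (by positivity) (by linarith [hε n]) hq.le
  refine ge_of_tendsto' (x := (atTop : Filter ℕ)) ?_ key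
  refine tendsto_lintegral_of_dominated_convergence'
    (fun z => ENNReal.ofReal ((‖φ z‖ ^ 2 + 1) ^ (p / 2))) ?_ ?_ ?_ ?_
  · intro n
    have hcon : ContinuousOn (fun z => ENNReal.ofReal ((‖φ z‖ ^ 2 + 1 / ((n:ℝ) + 1)) ^ (p / 2))) Ω :=
      ENNReal.continuous_ofReal.comp_continuousOn (contDiffOn_reg hΩ hφ (hε n)).continuousOn
    have := hcon.aemeasurable (μ := μfam R) hΩ.measurableSet
    rwa [Measure.restrict_eq_self_of_ae_mem] at this
    filter_upwards [mu_supp hΩ hu hν hfin hR hz0 (hz0r.trans hrR) (hμ R hR)] with z hz using hz.1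
  · intro n
    refine Eventually.of_forall fun z => ENNReal.ofReal_le_ofReal ?_
    refine Real.rpow_le_rpow (by positivity) ?_ hq.le
    have : 1 / ((n:ℝ) + 1) ≤ 1 := by
      rw [div_le_one (by positivity)]; linarith [(Nat.cast_nonneg n : (0:ℝ) ≤ n)]
    linarith
  · exact (mono_eps hΩ hu hν hfin (r := R) (R := R / 2) (by linarith) (by linarith) hz0
      (hz0r.trans hrR) (hμ R hR) (hμ (R / 2) (by linarith)) hφ one_pos hq.le).2.ne
  · refine Eventually.of_forall fun z => ?_
    refine (ENNReal.continuous_ofReal.tendsto _).comp ?_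
    rw [e]
    refine Tendsto.rpow_const (tendsto_const_nhds.add tendsto_one_div_add_atTop_nhds_zero_nat) ?_
    exact Or.inr hq.le

/-- uniform bound -/
lemma bound_ps {Ω : Set ℂ} (hΩ : IsOpen Ω) {u : ℂ → ℝ} (hu : IsExhaustion u Ω)
    {ν : Measure ℂ} (hν : IsRieszMeasure u Ω ν) (hfin : ν univ < ⊤)
    {μfam : ℝ → Measure ℂ} (hμ : ∀ r : ℝ, r < 0 → IsMAMeasure u Ω ν r (μfam r))
    {z0 : ℂ} (hz0 : z0 ∈ Ω) {p : ℝ} (hp : 0 < p) {f : ℂ → ℂ}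
    (hf : psNormPow p μfam f < ⊤) :
    ∃ M : ℝ≥0∞, M < ⊤ ∧ ∀ φ : ℂ → ℂ, DifferentiableOn ℂ φ Ω →
      (∃ L, IsCompact L ∧ L ⊆ Ω ∧ ∀ z ∈ Ω, z ∉ L → ‖φ z‖ ≤ 2 * ‖f z‖) →
      ∀ r, u z0 < r → r < 0 → ∫⁻ z, ENNReal.ofReal (‖φ z‖ ^ p) ∂(μfam r) ≤ M := by
  refine ⟨ENNReal.ofReal (2 ^ p) * (psNormPow p μfam f + 1), ?_, ?_⟩
  · exact ENNReal.mul_lt_top ENNReal.ofReal_lt_top (ENNReal.add_lt_top.2 ⟨hf, ENNReal.one_lt_top⟩)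
  rintro φ hφ ⟨L, hL, hLΩ, hle⟩ r hr0 hr
  have hev : ∀ᶠ R in 𝓝[<] (0:ℝ), ∫⁻ z, ENNReal.ofReal (‖f z‖ ^ p) ∂(μfam R) <
      psNormPow p μfam f + 1 := by
    refine eventually_lt_of_limsup_lt ?_
    exact ENNReal.lt_add_right hf.ne one_ne_zero
  obtain ⟨c, hc, hcL⟩ : ∃ c < 0, ∀ z ∈ L, u z ≤ c := by
    rcases L.eq_empty_or_nonempty with rfl | hne
    · exact ⟨-1, by norm_num, by simp⟩
    · obtain ⟨y, hy, hm⟩ := hL.exists_isMaxOn hne (hu.subh.1.mono hLΩ)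
      exact ⟨u y, hu.neg y (hLΩ hy), fun z hz => hm hz⟩
  have h2 : ∀ᶠ R in 𝓝[<] (0:ℝ), max c r < R :=
    eventually_nhdsWithin_of_eventually_nhds (lt_mem_nhds (max_lt hc hr))
  obtain ⟨R, ⟨hR1, hR2⟩, hR3⟩ := ((hev.and h2).and self_mem_nhdsWithin).exists
  have hR3 : R < 0 := hR3
  have hrR : r < R := (le_max_right _ _).trans_lt hR2
  have hcR : c < R := (le_max_left _ _).trans_lt hR2
  refine (mono_ps hΩ hu hν hfin hμ hrR hR3 hz0 hr0 hφ hp).trans ?_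
  calc ∫⁻ z, ENNReal.ofReal (‖φ z‖ ^ p) ∂(μfam R)
      ≤ ∫⁻ z, ENNReal.ofReal (2 ^ p) * ENNReal.ofReal (‖f z‖ ^ p) ∂(μfam R) := by
        refine lintegral_mono_ae ?_
        filter_upwards [mu_supp hΩ hu hν hfin hR3 hz0 (hr0.trans hrR) (hμ R hR3)] with z hz
        rw [← ENNReal.ofReal_mul (by positivity), ← Real.mul_rpow (by norm_num) (norm_nonneg _)]
        refine ENNReal.ofReal_le_ofReal (Real.rpow_le_rpow (norm_nonneg _) ?_ hp.le)
        refine hle z hz.1 fun hzL => ?_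
        have := hcL z hzL
        rw [hz.2] at this
        linarith
    _ = ENNReal.ofReal (2 ^ p) * ∫⁻ z, ENNReal.ofReal (‖f z‖ ^ p) ∂(μfam R) :=
        lintegral_const_mul' _ _ ENNReal.ofReal_ne_top
    _ ≤ _ := by gcongr


lemma conf_inv {Ω : Set ℂ} {ψ : ℂ → ℂ} (h : IsConformalOnto ψ Ω) (hΩ : IsOpen Ω) :
    ∃ τ : ℂ → ℂ, DifferentiableOn ℂ τ Ω ∧ (∀ z ∈ Ω, τ z ∈ ball (0:ℂ) 1) ∧
      (∀ z ∈ Ω, ψ (τ z) = z) ∧ ∀ w ∈ ball (0:ℂ) 1, τ (ψ w) = w := by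
  obtain ⟨hd, hi, him, -⟩ := h
  have hb : IsOpen (ball (0:ℂ) 1) := isOpen_ball
  have hpre : IsPreconnected (ball (0:ℂ) 1) := (convex_ball _ _).isPreconnected
  have han : AnalyticOnNhd ℂ ψ (ball 0 1) := (Complex.analyticOnNhd_iff_differentiableOn hb).2 hd
  have hnc : ∀ w, ¬ ∀ z ∈ ball (0:ℂ) 1, ψ z = w := by
    intro w hw
    have h0 : (0:ℂ) ∈ ball (0:ℂ) 1 := by simp
    have h1 : (1/2:ℂ) ∈ ball (0:ℂ) 1 := by simp; norm_num
    have := hi h0 h1 (by rw [hw _ h0, hw _ h1])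
    norm_num at this
  have hop : ∀ s ⊆ ball (0:ℂ) 1, IsOpen s → IsOpen (ψ '' s) := by
    rcases han.is_constant_or_isOpen hpre with ⟨w, hw⟩ | h
    · exact absurd hw (hnc w)
    · exact h
  set τ := Function.invFunOn ψ (ball (0:ℂ) 1)
  have hl : ∀ w ∈ ball (0:ℂ) 1, τ (ψ w) = w := fun w hw => hi.leftInvOn_invFunOn hw
  have hm : ∀ z ∈ Ω, τ z ∈ ball (0:ℂ) 1 := by
    intro z hz; rw [← him] at hz; obtain ⟨w, hw, rfl⟩ := hz; rwa [hl w hw]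
  have hr : ∀ z ∈ Ω, ψ (τ z) = z := by
    intro z hz; rw [← him] at hz; obtain ⟨w, hw, rfl⟩ := hz; rw [hl w hw]
  have hcont : ∀ z ∈ Ω, ContinuousAt τ z := by
    intro z hz
    rw [ContinuousAt, _root_.tendsto_nhds]
    intro s hs hzs
    have ho := hop (s ∩ ball 0 1) inter_subset_right (hs.inter hb)
    refine mem_of_superset (ho.mem_nhds ⟨τ z, ⟨hzs, hm z hz⟩, hr z hz⟩) ?_
    rintro _ ⟨w, ⟨hw, hw'⟩, rfl⟩
    show τ (ψ w) ∈ s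
    rwa [hl w hw']
  have hder : ∀ z ∈ Ω, deriv ψ (τ z) ≠ 0 → DifferentiableAt ℂ τ z := by
    intro z hz h0
    refine (HasDerivAt.of_local_left_inverse (hcont z hz)
      ((hd.differentiableAt (hb.mem_nhds (hm z hz))).hasDerivAt) h0 ?_).differentiableAt
    filter_upwards [hΩ.mem_nhds hz] with y hy using hr y hy
  refine ⟨τ, ?_, hm, hr, hl⟩
  intro z hz
  have hda : AnalyticOnNhd ℂ (deriv ψ) (ball 0 1) := han.deriv
  rcases (hda (τ z) (hm z hz)).eventually_eq_zero_or_eventually_ne_zero with h0 | h0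
  · exfalso
    have h1 := hda.eqOn_zero_of_preconnected_of_eventuallyEq_zero hpre (hm z hz) h0
    exact hnc (ψ 0) fun w hw => hb.is_const_of_deriv_eq_zero hpre hd h1 hw (by simp)
  · have h1 : ∀ᶠ y in 𝓝 z, y ≠ z → DifferentiableAt ℂ τ y := by
      have h2 := (hcont z hz).eventually (eventually_nhdsWithin_iff.1 h0)
      filter_upwards [h2, hΩ.mem_nhds hz] with y hy hyΩ hyz
      refine hder y hyΩ (hy ?_)
      intro he
      apply hyz
      rw [← hr y hyΩ, ← hr z hz, he]
    refine DifferentiableAt.differentiableWithinAt ?_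
    have := (Complex.differentiableOn_compl_singleton_and_continuousAt_iff h1).1
      ⟨fun y hy => (hy.1 hy.2).differentiableWithinAt, hcont z hz⟩
    exact this.differentiableAt h1

/-- compact subset of open disc lies in a smaller closed disc -/
lemma compact_sub_disc {K : Set ℂ} (hK : IsCompact K) (h : K ⊆ ball (0:ℂ) 1) :
    ∃ t : ℝ, 0 < t ∧ t < 1 ∧ ∀ z ∈ K, ‖z‖ ≤ t := by
  rcases K.eq_empty_or_nonempty with rfl | hne
  · exact ⟨1/2, by norm_num, by norm_num, by simp⟩
  · obtain ⟨y, hy, hm⟩ := hK.exists_isMaxOn hne (continuous_norm.continuousOn)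
    have h1 : ‖y‖ < 1 := by simpa using h hy
    refine ⟨(1 + ‖y‖)/2, by positivity, by linarith, fun z hz => ?_⟩
    have : ‖z‖ ≤ ‖y‖ := hm hz
    linarith


def etaP (a : ℂ) : ℂ := a / (‖a‖ : ℂ)
def bet (a z : ℂ) : ℂ := (1 - (‖a‖:ℂ)) * (etaP a + z) / (etaP a - (‖a‖:ℂ) * z)
def bl (a z : ℂ) : ℂ := 1 - bet a z
def kk (a z : ℂ) : ℂ := (1 - (‖a‖:ℂ)) * (etaP a + z) / (etaP a - z)

/-- admissible points -/
def Adm (a : ℂ) : Prop := 0 < ‖a‖ ∧ ‖a‖ ≤ 1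

lemma norm_eta {a : ℂ} (h : Adm a) : ‖etaP a‖ = 1 := by
  have := h.1
  simp [etaP, this.ne']

lemma eta_mul {a : ℂ} (h : Adm a) : etaP a * (‖a‖:ℂ) = a := by
  have : (‖a‖:ℂ) ≠ 0 := by exact_mod_cast h.1.ne'
  simp [etaP, this]

lemma norm_c {a : ℂ} (h : Adm a) : ‖(1 - (‖a‖:ℂ))‖ = 1 - ‖a‖ := by
  have : (1 - (‖a‖:ℂ)) = ((1 - ‖a‖ : ℝ) : ℂ) := by push_cast; rfl
  rw [this, Complex.norm_real, Real.norm_of_nonneg (by linarith [h.2])]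

lemma den_ge {a z : ℂ} (h : Adm a) : 1 - ‖a‖ * ‖z‖ ≤ ‖etaP a - (‖a‖:ℂ) * z‖ := by
  have := norm_sub_norm_le (etaP a) ((‖a‖:ℂ) * z)
  rwa [norm_eta h, norm_mul, Complex.norm_real, norm_norm] at this

lemma den_ge' {a z : ℂ} (h : Adm a) (hz : ‖z‖ ≤ 1) : 1 - ‖z‖ ≤ ‖etaP a - (‖a‖:ℂ) * z‖ := by
  refine le_trans ?_ (den_ge h)
  nlinarith [h.2, norm_nonneg z]

lemma den_ge'' {a z : ℂ} (h : Adm a) (hz : ‖z‖ ≤ 1) : 1 - ‖a‖ ≤ ‖etaP a - (‖a‖:ℂ) * z‖ := by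
  refine le_trans ?_ (den_ge h)
  nlinarith [h.1, norm_nonneg z]

lemma den_half {a z : ℂ} (h : Adm a) (hz : ‖z‖ ≤ 1) :
    ‖etaP a - z‖ ≤ 2 * ‖etaP a - (‖a‖:ℂ) * z‖ := by
  have h1 : etaP a - z = (etaP a - (‖a‖:ℂ) * z) - (1 - (‖a‖:ℂ)) * z := by ring
  have h2 : ‖etaP a - z‖ ≤ ‖etaP a - (‖a‖:ℂ) * z‖ + (1 - ‖a‖) * ‖z‖ := by
    rw [h1]; refine (norm_sub_le _ _).trans ?_
    rw [norm_mul, norm_c h]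
  have h3 := den_ge (z := z) h
  nlinarith [h.2, norm_nonneg z]

lemma den_ne {a z : ℂ} (h : Adm a) (hz : ‖z‖ < 1) : etaP a - (‖a‖:ℂ) * z ≠ 0 := by
  intro h0
  have := den_ge' h hz.le
  rw [h0, norm_zero] at this; linarith

lemma den2_ge {a z : ℂ} (h : Adm a) : 1 - ‖z‖ ≤ ‖etaP a - z‖ := by
  have := norm_sub_norm_le (etaP a) z
  rwa [norm_eta h] at this

lemma den2_ne {a z : ℂ} (h : Adm a) (hz : ‖z‖ < 1) : etaP a - z ≠ 0 := by
  intro h0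
  have := den2_ge (z := z) h
  rw [h0, norm_zero] at this; linarith

lemma bl_eq {a z : ℂ} (h : Adm a) (hz : etaP a - (‖a‖:ℂ) * z ≠ 0) :
    bl a z = (a - z) / (etaP a - (‖a‖:ℂ) * z) := by
  rw [bl, bet, eq_div_iff hz, sub_mul, div_mul_cancel₀ _ hz]
  linear_combination (1 : ℂ) * eta_mul h

lemma blaschke_id {a z : ℂ} (h : Adm a) :
    ‖etaP a - (‖a‖:ℂ) * z‖ ^ 2 - ‖a - z‖ ^ 2 = (1 - ‖a‖ ^ 2) * (1 - ‖z‖ ^ 2) := by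
  have h1 : ‖etaP a‖ ^ 2 = 1 := by rw [norm_eta h]; norm_num
  have h2 := eta_mul h
  set e := etaP a
  set s := ‖a‖
  have hr : a.re = e.re * s := by rw [← h2]; simp
  have hi : a.im = e.im * s := by rw [← h2]; simp
  rw [← normSq_eq_norm_sq, normSq_apply] at h1
  simp only [← normSq_eq_norm_sq, normSq_apply, sub_re, sub_im, mul_re, mul_im, ofReal_re,
    ofReal_im, hr, hi]
  linear_combination (1 - s^2) * h1

lemma norm_bl_sq {a z : ℂ} (h : Adm a) (hz : etaP a - (‖a‖:ℂ) * z ≠ 0) :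
    ‖bl a z‖ ^ 2 = 1 - (1 - ‖a‖ ^ 2) * (1 - ‖z‖ ^ 2) / ‖etaP a - (‖a‖:ℂ) * z‖ ^ 2 := by
  have h0 : ‖etaP a - (‖a‖:ℂ) * z‖ ≠ 0 := norm_ne_zero_iff.2 hz
  rw [← blaschke_id h, bl_eq h hz, norm_div, div_pow, sub_div, div_self (pow_ne_zero 2 h0)]
  ring

lemma norm_bl_le {a z : ℂ} (h : Adm a) (hz : ‖z‖ < 1) : ‖bl a z‖ ≤ 1 := by
  have := norm_bl_sq h (den_ne h hz)
  have h2 : 0 ≤ (1 - ‖a‖ ^ 2) * (1 - ‖z‖ ^ 2) / ‖etaP a - (‖a‖:ℂ) * z‖ ^ 2 := by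
    have h3 : 0 ≤ 1 - ‖a‖ ^ 2 := by nlinarith [h.1, h.2]
    have h4 : 0 ≤ 1 - ‖z‖ ^ 2 := by nlinarith [norm_nonneg z]
    positivity
  exact (sq_le_one_iff₀ (norm_nonneg _)).1 (by linarith)

lemma norm_bl_le_exp {a z : ℂ} {t : ℝ} (h : Adm a) (hz : ‖z‖ ≤ t) (ht : t < 1) :
    ‖bl a z‖ ≤ Real.exp (-((1 - t) / 8 * (1 - ‖a‖))) := by
  have hz1 : ‖z‖ < 1 := hz.trans_lt ht
  have h1 := norm_bl_sq h (den_ne h hz1)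
  have h0 : 0 < ‖etaP a - (‖a‖:ℂ) * z‖ := norm_pos_iff.2 (den_ne h hz1)
  have h5 : ‖etaP a - (‖a‖:ℂ) * z‖ ≤ 2 := by
    refine (norm_sub_le _ _).trans ?_
    rw [norm_eta h, norm_mul, Complex.norm_real, norm_norm]
    nlinarith [h.2, h.1, norm_nonneg z]
  have h2 : (1 - t) / 4 * (1 - ‖a‖) ≤
      (1 - ‖a‖ ^ 2) * (1 - ‖z‖ ^ 2) / ‖etaP a - (‖a‖:ℂ) * z‖ ^ 2 := by
    have h3 : 1 - ‖a‖ ≤ 1 - ‖a‖ ^ 2 := by nlinarith [h.1, h.2]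
    have h4 : 1 - t ≤ 1 - ‖z‖ ^ 2 := by nlinarith [norm_nonneg z]
    have h6 : (1 - ‖a‖) * (1 - t) ≤ (1 - ‖a‖ ^ 2) * (1 - ‖z‖ ^ 2) :=
      mul_le_mul h3 h4 (by linarith) (by nlinarith [h.1, h.2])
    rw [le_div_iff₀ (by positivity)]
    have h7 : ‖etaP a - (‖a‖:ℂ) * z‖ ^ 2 ≤ 4 := by nlinarith
    have h8 : 0 ≤ (1 - ‖a‖) * (1 - t) := mul_nonneg (by linarith [h.2]) (by linarith)
    nlinarith
  have h9 : ‖bl a z‖ ^ 2 ≤ Real.exp (-((1 - t) / 8 * (1 - ‖a‖))) ^ 2 := by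
    rw [← Real.exp_nat_mul]
    have := Real.add_one_le_exp (((2:ℕ):ℝ) * -((1 - t) / 8 * (1 - ‖a‖)))
    push_cast at this ⊢
    linarith
  exact (sq_le_sq₀ (norm_nonneg _) (Real.exp_pos _).le).1 h9

lemma norm_bl_sq_ge {a z : ℂ} {s : ℝ} (h : Adm a) (has : ‖a‖ ≤ s) (hs : s < 1) (hz : ‖z‖ < 1) :
    1 - 2 * (1 - ‖z‖) / (1 - s) ^ 2 ≤ ‖bl a z‖ ^ 2 := by
  rw [norm_bl_sq h (den_ne h hz)]
  have h1 := den_ge'' h hz.le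
  have h0 : 0 < 1 - s := by linarith
  have : (1 - ‖a‖ ^ 2) * (1 - ‖z‖ ^ 2) / ‖etaP a - (‖a‖:ℂ) * z‖ ^ 2 ≤
      2 * (1 - ‖z‖) / (1 - s) ^ 2 := by
    gcongr ?_ / ?_ ^ 2
    · have h3 : 1 - ‖a‖ ^ 2 ≤ 1 := by nlinarith [h.1]
      have h4 : 1 - ‖z‖ ^ 2 ≤ 2 * (1 - ‖z‖) := by nlinarith [norm_nonneg z]
      have h5 : 0 ≤ 1 - ‖z‖ ^ 2 := by nlinarith [norm_nonneg z]
      nlinarith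
    · linarith
  linarith

lemma bet_eq_zero {a z : ℂ} (h : ‖a‖ = 1) : bet a z = 0 := by simp [bet, h]

lemma bl_ne {a z : ℂ} (h : Adm a) (hz : ‖z‖ < 1) (hne : z ≠ a) : bl a z ≠ 0 := by
  rw [bl_eq h (den_ne h hz)]
  exact div_ne_zero (sub_ne_zero.2 hne.symm) (den_ne h hz)

lemma num_le {a z : ℂ} (h : Adm a) (hz : ‖z‖ ≤ 1) : ‖etaP a + z‖ ≤ 2 := by
  refine (norm_add_le _ _).trans ?_
  rw [norm_eta h]; linarith

lemma norm_bet_le {a z : ℂ} (h : Adm a) (hz : ‖z‖ < 1) :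
    ‖bet a z‖ ≤ 2 * (1 - ‖a‖) / (1 - ‖z‖) := by
  rw [bet, norm_div, norm_mul, norm_c h]
  have h0 : 0 < 1 - ‖z‖ := by linarith
  have h1 := den_ge' h hz.le
  have h2 := num_le h hz.le
  have h3 : 0 ≤ 1 - ‖a‖ := by linarith [h.2]
  gcongr ?_ / ?_
  nlinarith

lemma norm_kk_le {a z : ℂ} (h : Adm a) (hz : ‖z‖ < 1) :
    ‖kk a z‖ ≤ 2 * (1 - ‖a‖) / (1 - ‖z‖) := by
  rw [kk, norm_div, norm_mul, norm_c h]
  have h0 : 0 < 1 - ‖z‖ := by linarith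
  have h1 := den2_ge (z := z) h
  have h2 := num_le h hz.le
  have h3 : 0 ≤ 1 - ‖a‖ := by linarith [h.2]
  gcongr ?_ / ?_
  nlinarith

lemma kk_re {a z : ℂ} (h : Adm a) :
    (kk a z).re = (1 - ‖a‖) * (1 - ‖z‖ ^ 2) / ‖etaP a - z‖ ^ 2 := by
  have h1 : ‖etaP a‖ ^ 2 = 1 := by rw [norm_eta h]; norm_num
  have e1 : (1 - (‖a‖:ℂ)) = ((1 - ‖a‖ : ℝ) : ℂ) := by push_cast; rfl
  rw [← normSq_eq_norm_sq, normSq_apply] at h1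
  rw [kk, e1, mul_div_assoc, Complex.re_ofReal_mul, div_re, ← normSq_eq_norm_sq (etaP a - z),
    ← add_div, mul_div_assoc]
  congr 2
  simp only [← normSq_eq_norm_sq, normSq_apply, sub_re, sub_im, add_re, add_im]
  linear_combination h1

lemma kk_re_nonneg {a z : ℂ} (h : Adm a) (hz : ‖z‖ < 1) : 0 ≤ (kk a z).re := by
  rw [kk_re h]
  have : 0 ≤ 1 - ‖a‖ := by linarith [h.2]
  have : 0 ≤ 1 - ‖z‖ ^ 2 := by nlinarith [norm_nonneg z]
  positivity

lemma bet_diff {a : ℂ} (h : Adm a) : DifferentiableOn ℂ (bet a) (ball 0 1) := by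
  intro z hz
  have hz : ‖z‖ < 1 := by simpa using hz
  have := den_ne h hz
  unfold bet
  have h1 : DifferentiableAt ℂ (fun z => (1 - (‖a‖:ℂ)) * (etaP a + z)) z := by fun_prop
  have h2 : DifferentiableAt ℂ (fun z => etaP a - (‖a‖:ℂ) * z) z :=
    (differentiableAt_const _).sub (differentiableAt_id.const_mul _)
  exact (h1.div h2 this).differentiableWithinAt

lemma kk_diff {a : ℂ} (h : Adm a) : DifferentiableOn ℂ (kk a) (ball 0 1) := by
  intro z hz
  have hz : ‖z‖ < 1 := by simpa using hz
  have := den2_ne h hz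
  unfold kk
  exact (DifferentiableAt.div (by fun_prop) (by fun_prop) this).differentiableWithinAt

/-- the filter of approach to the unit circle -/
lemma bl_tendsto {a : ℂ} (h : Adm a) :
    Tendsto (fun z => ‖bl a z‖) (comap (fun z : ℂ => ‖z‖) (𝓝[<] 1)) (𝓝 1) := by
  have hlt : ∀ᶠ z in comap (fun z : ℂ => ‖z‖) (𝓝[<] (1:ℝ)), ‖z‖ < 1 :=
    (tendsto_comap (f := fun z : ℂ => ‖z‖)).eventually (self_mem_nhdsWithin : Iio (1:ℝ) ∈ 𝓝[<] 1)
  rcases h.2.lt_or_eq with h1 | h1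
  · have hsq : Tendsto (fun z => ‖bl a z‖ ^ 2) (comap (fun z : ℂ => ‖z‖) (𝓝[<] 1)) (𝓝 1) := by
      have hl : Tendsto (fun z : ℂ => 1 - 2 * (1 - ‖z‖) / (1 - ‖a‖) ^ 2)
          (comap (fun z : ℂ => ‖z‖) (𝓝[<] 1)) (𝓝 1) := by
        have hc : Tendsto (fun x : ℝ => 1 - 2 * (1 - x) / (1 - ‖a‖) ^ 2) (𝓝[<] 1) (𝓝 1) := by
          have : Continuous (fun x : ℝ => 1 - 2 * (1 - x) / (1 - ‖a‖) ^ 2) := by fun_prop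
          have := (this.tendsto 1).mono_left (nhdsWithin_le_nhds (s := Iio 1))
          simpa using this
        exact hc.comp tendsto_comap
      refine tendsto_of_tendsto_of_tendsto_of_le_of_le' hl tendsto_const_nhds ?_ ?_
      · filter_upwards [hlt] with z hz using norm_bl_sq_ge h le_rfl h1 hz
      · filter_upwards [hlt] with z hz
        exact pow_le_one₀ (norm_nonneg _) (norm_bl_le h hz)
    have := hsq.sqrt
    simpa [Real.sqrt_sq] using this
  · simpa [bl, bet_eq_zero h1] using tendsto_const_nhds


lemma zero_order {f : ℂ → ℂ} (hf : DifferentiableOn ℂ f (ball 0 1))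
    (h0 : ∃ z ∈ ball (0:ℂ) 1, f z ≠ 0) :
    ∃ (m : ℕ) (f0 : ℂ → ℂ), DifferentiableOn ℂ f0 (ball 0 1) ∧ f0 0 ≠ 0 ∧
      ∀ z, f z = z ^ m * f0 z := by
  have hb : ball (0:ℂ) 1 ∈ 𝓝 0 := ball_mem_nhds _ one_pos
  have han : AnalyticOnNhd ℂ f (ball 0 1) :=
    (Complex.analyticOnNhd_iff_differentiableOn isOpen_ball).2 hf
  obtain ⟨P, hP⟩ := han 0 (by simp)
  have hP0 : P ≠ 0 := by
    intro h
    rw [h] at hP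
    obtain ⟨z, hz, hz0⟩ := h0
    have := han.eqOn_zero_of_preconnected_of_eventuallyEq_zero
      (convex_ball _ _).isPreconnected (by simp) hP.eventually_eq_zero
    exact hz0 (this hz)
  refine ⟨P.order, (Function.swap dslope 0)^[P.order] f, ?_, ?_, ?_⟩
  · generalize P.order = n
    induction n with
    | zero => exact hf
    | succ n ih =>
      rw [Function.iterate_succ_apply']
      exact (Complex.differentiableOn_dslope hb).2 ih
  · exact hP.iterate_dslope_fslope_ne_zero hP0
  · intro z
    have := hP.eq_pow_order_mul_iterate_dslope z
    simpa using this

lemma bstep {f : ℂ → ℂ} (hf : DifferentiableOn ℂ f (ball 0 1)) (h0 : f 0 ≠ 0) :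
    ∃ (a : ℂ) (g : ℂ → ℂ), Adm a ∧ DifferentiableOn ℂ g (ball 0 1) ∧ g 0 ≠ 0 ∧
      (∀ z ∈ ball (0:ℂ) 1, f z = bl a z * g z) ∧
      ∀ z ∈ ball (0:ℂ) 1, f z = 0 → ‖a‖ ≤ ‖z‖ := by
  by_cases hz : ∃ z ∈ ball (0:ℂ) 1, f z = 0
  · obtain ⟨z1, hz1, hfz1⟩ := hz
    have hz1' : ‖z1‖ < 1 := by simpa using hz1
    have hsub : closedBall (0:ℂ) ‖z1‖ ⊆ ball 0 1 := closedBall_subset_ball hz1'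
    have hK : IsCompact (closedBall (0:ℂ) ‖z1‖ ∩ f ⁻¹' {0}) :=
      (isCompact_closedBall _ _).of_isClosed_subset
        ((hf.continuousOn.mono hsub).preimage_isClosed_of_isClosed isClosed_closedBall
          isClosed_singleton) inter_subset_left
    obtain ⟨a, ⟨ha1, ha2⟩, hmin⟩ := hK.exists_isMinOn ⟨z1, by simp, hfz1⟩
      continuous_norm.continuousOn
    have ha1 : ‖a‖ ≤ ‖z1‖ := by simpa using ha1
    have ha2 : f a = 0 := ha2
    have hane : a ≠ 0 := by rintro rfl; exact h0 ha2
    have hab : a ∈ ball (0:ℂ) 1 := by simp; linarith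
    have hA : Adm a := ⟨norm_pos_iff.2 hane, by linarith⟩
    have hfac : ∀ z ∈ ball (0:ℂ) 1, f z =
        bl a z * (-(etaP a - (‖a‖:ℂ) * z) * dslope f a z) := by
      intro z hz
      have hz' : ‖z‖ < 1 := by simpa using hz
      have h1 := sub_smul_dslope f a z
      rw [ha2, sub_zero, smul_eq_mul] at h1
      have hd := den_ne hA hz'
      rw [bl_eq hA hd, ← h1, ← mul_assoc, mul_neg, div_mul_cancel₀ _ hd]
      ring
    refine ⟨a, fun z => -(etaP a - (‖a‖:ℂ) * z) * dslope f a z, hA, ?_, ?_, hfac, ?_⟩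
    · have hd := (Complex.differentiableOn_dslope (isOpen_ball.mem_nhds hab)).2 hf
      refine DifferentiableOn.mul ?_ hd
      have h2 : Differentiable ℂ (fun z => -(etaP a - (‖a‖:ℂ) * z)) :=
        ((differentiable_const _).sub (differentiable_id.const_mul _)).neg
      exact h2.differentiableOn
    · intro h
      apply h0
      rw [hfac 0 (by simp)]
      simp only at h
      rw [h, mul_zero]
    · intro z hz hfz
      by_cases hzz : ‖z‖ ≤ ‖z1‖
      · exact hmin ⟨by simpa using hzz, hfz⟩
      · linarith
  · push Not at hz
    refine ⟨1, f, ⟨by simp, by simp⟩, hf, h0, ?_, ?_⟩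
    · intro z _; simp [bl, bet]
    · intro z hz' h; exact absurd h (hz z hz')

structure BSeq (a : ℕ → ℂ) (F : ℕ → ℂ → ℂ) : Prop where
  adm : ∀ n, Adm (a n)
  diff : ∀ n, DifferentiableOn ℂ (F n) (ball 0 1)
  ne : F 0 0 ≠ 0
  fac : ∀ n, ∀ z ∈ ball (0:ℂ) 1, F n z = bl (a n) z * F (n+1) z
  zer : ∀ n, ∀ z ∈ ball (0:ℂ) 1, F n z = 0 → ‖a n‖ ≤ ‖z‖

lemma exists_bseq {f : ℂ → ℂ} (hf : DifferentiableOn ℂ f (ball 0 1)) (h0 : f 0 ≠ 0) :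
    ∃ a F, F 0 = f ∧ BSeq a F := by
  choose A G h1 h2 h3 h4 h5 using
    fun s : {f : ℂ → ℂ // DifferentiableOn ℂ f (ball 0 1) ∧ f 0 ≠ 0} => bstep s.2.1 s.2.2
  let st : ℕ → {f : ℂ → ℂ // DifferentiableOn ℂ f (ball 0 1) ∧ f 0 ≠ 0} :=
    fun n => Nat.rec ⟨f, hf, h0⟩ (fun _ s => ⟨G s, h2 s, h3 s⟩) n
  exact ⟨fun n => A (st n), fun n => (st n).1, rfl,
    ⟨fun n => h1 _, fun n => (st n).2.1, h0, fun n => h4 (st n), fun n => h5 (st n)⟩⟩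

lemma BSeq.prod {a : ℕ → ℂ} {F : ℕ → ℂ → ℂ} (h : BSeq a F) (N n : ℕ) {z : ℂ}
    (hz : z ∈ ball (0:ℂ) 1) :
    F N z = (∏ i ∈ Finset.range n, bl (a (N + i)) z) * F (N + n) z := by
  induction n with
  | zero => simp
  | succ n ih => rw [ih, Finset.prod_range_succ, h.fac (N + n) z hz]; simp only [← add_assoc, mul_assoc]

lemma bl_zero {a : ℂ} (h : Adm a) : bl a 0 = (‖a‖:ℂ) := by
  have h1 : etaP a ≠ 0 := norm_ne_zero_iff.1 (by rw [norm_eta h]; norm_num)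
  rw [bl_eq h (by simpa using h1)]
  simp only [sub_zero, mul_zero]
  rw [div_eq_iff h1, mul_comm, eta_mul h]

/-- Zero-free eventually on compact subdiscs. -/
lemma BSeq.zero_free {a : ℕ → ℂ} {F : ℕ → ℂ → ℂ} (h : BSeq a F) {t : ℝ} (ht0 : 0 < t) (ht : t < 1) :
    ∃ N, ∀ z, ‖z‖ ≤ t → F N z ≠ 0 := by
  by_contra hcon
  push Not at hcon
  have ha : ∀ n, ‖a n‖ ≤ t := by
    intro n
    obtain ⟨z, hz, hFz⟩ := hcon n
    exact (h.zer n z (by simp; linarith) hFz).trans hz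
  obtain ⟨ρ, hρ0, hρ1⟩ := exists_between ht
  have hρp : 0 < ρ := ht0.trans hρ0
  -- choose s
  obtain ⟨s, hs0, hs1, hs⟩ : ∃ s : ℝ, 0 < s ∧ s < 1 ∧ ρ ^ 2 ≤ 1 - 2 * (1 - s) / (1 - t) ^ 2 := by
    have h1 : 0 < (1 - ρ ^ 2) * (1 - t) ^ 2 / 2 := by
      have : 0 < 1 - ρ ^ 2 := by nlinarith
      have : 0 < 1 - t := by linarith
      positivity
    have h2 : 0 < 1 - t := by linarith
    have h3 : (1 - ρ ^ 2) * (1 - t) ^ 2 / 2 < 1 := by nlinarith [sq_nonneg ρ]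
    refine ⟨1 - (1 - ρ ^ 2) * (1 - t) ^ 2 / 2, by linarith, by linarith, ?_⟩
    have : 2 * (1 - (1 - (1 - ρ ^ 2) * (1 - t) ^ 2 / 2)) / (1 - t) ^ 2 = 1 - ρ ^ 2 := by
      field_simp; ring
    rw [this]; linarith
  have hsub : closedBall (0:ℂ) s ⊆ ball 0 1 := closedBall_subset_ball hs1
  obtain ⟨M, hM⟩ := (isCompact_closedBall (0:ℂ) s).exists_bound_of_continuousOn
    ((h.diff 0).continuousOn.mono hsub)
  have key : ∀ n, ‖F 0 0‖ ≤ (t / ρ) ^ n * M := by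
    intro n
    have hmax : ‖F n 0‖ ≤ M / ρ ^ n := by
      refine Complex.norm_le_of_forall_mem_frontier_norm_le (U := ball (0:ℂ) s) isBounded_ball
        ?_ ?_ (subset_closure (by simpa using hs0))
      · refine DifferentiableOn.diffContOnCl ?_
        rw [closure_ball _ hs0.ne']
        exact (h.diff n).mono hsub
      · intro z hz
        rw [frontier_ball _ hs0.ne'] at hz
        have hzs : ‖z‖ = s := by simpa using hz
        have hz1 : ‖z‖ < 1 := by linarith
        have hp := h.prod 0 n (z := z) (by simpa using hz1)
        have hpr : ρ ^ n ≤ ‖∏ i ∈ Finset.range n, bl (a (0 + i)) z‖ := by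
          rw [norm_prod]
          calc ρ ^ n = ∏ i ∈ Finset.range n, ρ := by simp
            _ ≤ _ := Finset.prod_le_prod (fun _ _ => hρp.le) fun i _ => by
              refine (sq_le_sq₀ hρp.le (norm_nonneg _)).1 (hs.trans ?_)
              have := norm_bl_sq_ge (h.adm (0 + i)) (ha _) ht hz1
              rwa [hzs] at this
        rw [le_div_iff₀ (by positivity)]
        have h2 := hM z (by simp [hzs])
        rw [hp, norm_mul, zero_add] at h2
        nlinarith [norm_nonneg (F n z)]
    have hp := h.prod 0 n (z := 0) (by simp)
    rw [hp, norm_mul, norm_prod, zero_add]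
    have h1 : ∏ i ∈ Finset.range n, ‖bl (a (0 + i)) 0‖ ≤ t ^ n := by
      calc _ ≤ ∏ i ∈ Finset.range n, t := Finset.prod_le_prod (fun _ _ => norm_nonneg _) fun i _ => by
            rw [bl_zero (h.adm _), Complex.norm_real, norm_norm]; exact ha _
        _ = _ := by simp
    calc _ ≤ t ^ n * (M / ρ ^ n) := mul_le_mul h1 hmax (norm_nonneg _) (by positivity)
      _ = _ := by rw [div_pow]; ring
  have hlim : Tendsto (fun n : ℕ => (t / ρ) ^ n * M) atTop (𝓝 0) := by
    have := (tendsto_pow_atTop_nhds_zero_of_lt_one (r := t / ρ) (by positivity)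
      ((div_lt_one hρp).2 hρ0)).mul_const M
    simpa using this
  have := ge_of_tendsto' hlim key
  exact h.ne (norm_le_zero_iff.1 this)

/-- near the boundary, the partial products are bounded below -/
lemma BSeq.boundary {a : ℕ → ℂ} {F : ℕ → ℂ → ℂ} (h : BSeq a F) (m n : ℕ) :
    ∃ t : ℝ, t < 1 ∧ ∀ z : ℂ, t ≤ ‖z‖ → ‖z‖ < 1 → ‖F n z‖ ≤ 2 * ‖z ^ m * F 0 z‖ := by
  have h1 : Tendsto (fun z : ℂ => ‖z‖ ^ m * ∏ i ∈ Finset.range n, ‖bl (a i) z‖)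
      (comap (fun z : ℂ => ‖z‖) (𝓝[<] 1)) (𝓝 1) := by
    have e : (1:ℝ) = 1 ^ m * ∏ i ∈ Finset.range n, 1 := by simp
    conv_rhs => rw [e]
    refine Tendsto.mul (Tendsto.pow ?_ m) (tendsto_finsetProd _ fun i _ => bl_tendsto (h.adm i))
    exact tendsto_comap.mono_right nhdsWithin_le_nhds
  have h2 := h1.eventually (lt_mem_nhds (show (1/2:ℝ) < 1 by norm_num))
  rw [Filter.eventually_comap, eventually_nhdsWithin_iff] at h2
  obtain ⟨ε, hε, h3⟩ := Metric.eventually_nhds_iff.1 h2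
  refine ⟨1 - ε / 2, by linarith, fun z hz1 hz2 => ?_⟩
  have h4 := h3 (y := ‖z‖) (by rw [Real.dist_eq, abs_lt]; constructor <;> linarith) hz2 z rfl
  have hp := h.prod 0 n (z := z) (by simpa using hz2)
  simp only [zero_add] at hp
  rw [hp, norm_mul, norm_mul, norm_prod, norm_pow, ← mul_assoc]
  nlinarith [norm_nonneg (F n z)]

lemma BSeq.summable {a : ℕ → ℂ} {F : ℕ → ℂ → ℂ} (h : BSeq a F) {t M : ℝ} (ht0 : 0 < t) (ht : t < 1)
    (H : ∀ n, ∀ c : ℝ, (∀ z, ‖z‖ ≤ t → c ≤ ‖F n z‖) → c ≤ M) :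
    Summable fun n => 1 - ‖a n‖ := by
  obtain ⟨N, hN⟩ := h.zero_free ht0 ht
  have hsub : closedBall (0:ℂ) t ⊆ ball 0 1 := closedBall_subset_ball ht
  obtain ⟨y, hy, hmin⟩ := (isCompact_closedBall (0:ℂ) t).exists_isMinOn ⟨0, by simp [ht0.le]⟩
    (((h.diff N).continuousOn.mono hsub).norm)
  set c0 := ‖F N y‖ with hc0
  have hc0p : 0 < c0 := norm_pos_iff.2 (hN y (by simpa using hy))
  rw [← summable_nat_add_iff N]
  set δ := (1 - t) / 8 with hδ
  have hδp : 0 < δ := by have : 0 < 1 - t := by linarith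
                         positivity
  refine summable_of_sum_range_le (c := (M / c0) / δ) (fun n => by linarith [(h.adm (n + N)).2]) ?_
  intro n
  rw [le_div_iff₀ hδp, le_div_iff₀ hc0p]
  have h1 := H (N + n) (Real.exp ((∑ i ∈ Finset.range n, (1 - ‖a (i + N)‖)) * δ) * c0) ?_
  · refine le_trans ?_ h1
    have := Real.add_one_le_exp ((∑ i ∈ Finset.range n, (1 - ‖a (i + N)‖)) * δ)
    gcongr; linarith
  · intro z hz
    have hp := h.prod N n (z := z) (by simp; linarith)
    have h2 : c0 ≤ ‖F N z‖ := hmin (by simpa using hz)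
    rw [hp, norm_mul, norm_prod] at h2
    have h3 : ∏ i ∈ Finset.range n, ‖bl (a (N + i)) z‖ ≤
        Real.exp (-((∑ i ∈ Finset.range n, (1 - ‖a (i + N)‖)) * δ)) := by
      rw [Finset.sum_mul, ← Finset.sum_neg_distrib, Real.exp_sum]
      refine Finset.prod_le_prod (fun _ _ => norm_nonneg _) fun i _ => ?_
      refine (norm_bl_le_exp (h.adm _) hz ht).trans (le_of_eq ?_)
      rw [add_comm N i, mul_comm]
    have h4 : c0 ≤ Real.exp (-((∑ i ∈ Finset.range n, (1 - ‖a (i + N)‖)) * δ)) * ‖F (N + n) z‖ :=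
      h2.trans (by gcongr)
    rw [Real.exp_neg, inv_mul_eq_div, le_div_iff₀ (Real.exp_pos _)] at h4
    linarith


def BP (a : ℕ → ℂ) (z : ℂ) : ℂ := ∏' n, bl (a n) z
def KS (a : ℕ → ℂ) (z : ℂ) : ℂ := ∑' n, kk (a n) z

lemma summable_bet {a : ℕ → ℂ} (ha : ∀ n, Adm (a n)) (hs : Summable fun n => 1 - ‖a n‖) {z : ℂ}
    (hz : ‖z‖ < 1) : Summable fun n => ‖-bet (a n) z‖ := by
  refine Summable.of_nonneg_of_le (fun _ => norm_nonneg _) (fun n => ?_)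
    ((hs.mul_left 2).div_const (1 - ‖z‖))
  rw [norm_neg]
  exact norm_bet_le (ha n) hz

lemma summable_kk {a : ℕ → ℂ} (ha : ∀ n, Adm (a n)) (hs : Summable fun n => 1 - ‖a n‖) {z : ℂ}
    (hz : ‖z‖ < 1) : Summable fun n => kk (a n) z := by
  refine Summable.of_norm_bounded ((hs.mul_left 2).div_const (1 - ‖z‖)) fun n => ?_
  exact norm_kk_le (ha n) hz

lemma bl_eq_add (a z : ℂ) : bl a z = 1 + (-bet a z) := by rw [bl]; ring

lemma BP_hasProd {a : ℕ → ℂ} (ha : ∀ n, Adm (a n)) (hs : Summable fun n => 1 - ‖a n‖) {z : ℂ}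
    (hz : ‖z‖ < 1) : HasProd (fun n => bl (a n) z) (BP a z) := by
  have := multipliable_one_add_of_summable (summable_bet ha hs hz)
  simp_rw [← bl_eq_add] at this
  exact this.hasProd

lemma BP_tendsto {a : ℕ → ℂ} (ha : ∀ n, Adm (a n)) (hs : Summable fun n => 1 - ‖a n‖) {z : ℂ}
    (hz : ‖z‖ < 1) : Tendsto (fun n => ∏ i ∈ Finset.range n, bl (a i) z) atTop (𝓝 (BP a z)) :=
  (BP_hasProd ha hs hz).tendsto_prod_nat

lemma BP_diff {a : ℕ → ℂ} (ha : ∀ n, Adm (a n)) (hs : Summable fun n => 1 - ‖a n‖) :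
    DifferentiableOn ℂ (BP a) (ball 0 1) := by
  intro z hz
  have hz : ‖z‖ < 1 := by simpa using hz
  obtain ⟨t, ht1, ht2⟩ := exists_between hz
  have hsub : ball (0:ℂ) t ⊆ ball 0 1 := ball_subset_ball ht2.le
  have h1 := Summable.hasProdLocallyUniformlyOn_nat_one_add (K := ball (0:ℂ) t)
    (f := fun n z => -bet (a n) z) isOpen_ball
    ((hs.mul_left 2).div_const (1 - t)) (Eventually.of_forall fun n x hx => ?_)
    (fun n => ((bet_diff (ha n)).continuousOn.mono hsub).neg)
  · have h2 : DifferentiableOn ℂ (BP a) (ball 0 t) := by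
      simp_rw [← bl_eq_add] at h1
      refine TendstoLocallyUniformlyOn.differentiableOn h1 (Eventually.of_forall fun s => ?_)
        isOpen_ball
      refine DifferentiableOn.fun_finsetProd fun i _ => ?_
      exact (differentiableOn_const _).sub ((bet_diff (ha i)).mono hsub)
    exact (h2.differentiableAt (isOpen_ball.mem_nhds (by simpa using ht1))).differentiableWithinAt
  · have hx : ‖x‖ < t := by simpa using hx
    rw [norm_neg]
    refine (norm_bet_le (ha n) (hx.trans ht2)).trans ?_
    have := (ha n).2
    gcongr

lemma KS_diff {a : ℕ → ℂ} (ha : ∀ n, Adm (a n)) (hs : Summable fun n => 1 - ‖a n‖) :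
    DifferentiableOn ℂ (KS a) (ball 0 1) := by
  intro z hz
  have hz : ‖z‖ < 1 := by simpa using hz
  obtain ⟨t, ht1, ht2⟩ := exists_between hz
  have hsub : ball (0:ℂ) t ⊆ ball 0 1 := ball_subset_ball ht2.le
  have h2 : DifferentiableOn ℂ (KS a) (ball 0 t) := by
    refine Complex.differentiableOn_tsum_of_summable_norm ((hs.mul_left 2).div_const (1 - t))
      (fun n => (kk_diff (ha n)).mono hsub) isOpen_ball fun n x hx => ?_
    have hx : ‖x‖ < t := by simpa using hx
    refine (norm_kk_le (ha n) (hx.trans ht2)).trans ?_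
    have := (ha n).2
    gcongr
  exact (h2.differentiableAt (isOpen_ball.mem_nhds (by simpa using ht1))).differentiableWithinAt

lemma KS_re {a : ℕ → ℂ} (ha : ∀ n, Adm (a n)) (hs : Summable fun n => 1 - ‖a n‖) {z : ℂ}
    (hz : ‖z‖ < 1) : 0 ≤ (KS a z).re := by
  rw [KS, Complex.re_tsum (summable_kk ha hs hz)]
  exact tsum_nonneg fun n => kk_re_nonneg (ha n) hz

lemma norm_BP_le {a : ℕ → ℂ} (ha : ∀ n, Adm (a n)) (hs : Summable fun n => 1 - ‖a n‖) {z : ℂ}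
    (hz : ‖z‖ < 1) : ‖BP a z‖ ≤ 1 := by
  refine le_of_tendsto' (BP_tendsto ha hs hz).norm fun n => ?_
  rw [norm_prod]
  exact Finset.prod_le_one (fun _ _ => norm_nonneg _) fun i _ => norm_bl_le (ha i) hz

lemma BP_ne {a : ℕ → ℂ} (ha : ∀ n, Adm (a n)) (hs : Summable fun n => 1 - ‖a n‖) {z : ℂ}
    (hz : ‖z‖ < 1) (h : ∀ n, bl (a n) z ≠ 0) : BP a z ≠ 0 := by
  have := tprod_one_add_ne_zero_of_summable (f := fun n => -bet (a n) z)
    (fun n => by rw [← bl_eq_add]; exact h n) (summable_bet ha hs hz)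
  simp_rw [← bl_eq_add] at this
  exact this

lemma BSeq.limit {a : ℕ → ℂ} {F : ℕ → ℂ → ℂ} (h : BSeq a F) (hs : Summable fun n => 1 - ‖a n‖) :
    ∃ G : ℂ → ℂ, DifferentiableOn ℂ G (ball 0 1) ∧ (∀ z ∈ ball (0:ℂ) 1, G z ≠ 0) ∧
      (∀ z ∈ ball (0:ℂ) 1, Tendsto (fun n => F n z) atTop (𝓝 (G z))) ∧
      ∀ z ∈ ball (0:ℂ) 1, F 0 z = BP a z * G z := by
  have key : ∀ t : ℝ, 0 < t → t < 1 → ∃ N, ∀ z, ‖z‖ ≤ t → F N z ≠ 0 ∧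
      BP (fun i => a (N + i)) z ≠ 0 ∧
      Tendsto (fun n => F n z) atTop (𝓝 (F N z / BP (fun i => a (N + i)) z)) := by
    intro t ht0 ht1
    obtain ⟨N, hN⟩ := h.zero_free ht0 ht1
    have hs' : Summable fun i => 1 - ‖a (N + i)‖ := by
      have := (summable_nat_add_iff N).2 hs
      simpa [add_comm] using this
    refine ⟨N, fun z hz => ?_⟩
    have hz1 : ‖z‖ < 1 := by linarith
    have hzb : z ∈ ball (0:ℂ) 1 := by simpa using hz1
    have hne : ∀ n, ∏ i ∈ Finset.range n, bl (a (N + i)) z ≠ 0 := fun n h0 => by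
      apply hN z hz
      rw [h.prod N n hzb, h0, zero_mul]
    have hne' : ∀ n, bl (a (N + n)) z ≠ 0 := fun n =>
      (Finset.prod_ne_zero_iff.1 (hne (n + 1))) n (by simp)
    have hB := BP_ne (a := fun i => a (N + i)) (fun i => h.adm _) hs' hz1 hne'
    refine ⟨hN z hz, hB, ?_⟩
    have hT := BP_tendsto (a := fun i => a (N + i)) (fun i => h.adm _) hs' hz1
    rw [← tendsto_add_atTop_iff_nat N]
    refine (tendsto_const_nhds.div hT hB).congr fun n => ?_
    rw [Pi.div_apply, div_eq_iff (hne n), h.prod N n hzb, add_comm N n, mul_comm]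
  set G : ℂ → ℂ := fun z => limUnder atTop (fun n => F n z) with hG
  have tt : ∀ z ∈ ball (0:ℂ) 1, ∃ t : ℝ, 0 < t ∧ ‖z‖ < t ∧ t < 1 := by
    intro z hz
    have hz : ‖z‖ < 1 := by simpa using hz
    obtain ⟨t, h1, h2⟩ := exists_between hz
    exact ⟨t, (norm_nonneg z).trans_lt h1, h1, h2⟩
  have hlim : ∀ z ∈ ball (0:ℂ) 1, Tendsto (fun n => F n z) atTop (𝓝 (G z)) := by
    intro z hz
    obtain ⟨t, h0, h1, h2⟩ := tt z hz
    obtain ⟨N, hN⟩ := key t h0 h2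
    exact tendsto_nhds_limUnder ⟨_, (hN z h1.le).2.2⟩
  refine ⟨G, ?_, ?_, hlim, ?_⟩
  · intro z hz
    obtain ⟨t, h0, h1, h2⟩ := tt z hz
    obtain ⟨N, hN⟩ := key t h0 h2
    have hs' : Summable fun i => 1 - ‖a (N + i)‖ := by
      have := (summable_nat_add_iff N).2 hs
      simpa [add_comm] using this
    have hsub : ball (0:ℂ) t ⊆ ball 0 1 := ball_subset_ball h2.le
    have hd : DifferentiableOn ℂ (fun z => F N z / BP (fun i => a (N + i)) z) (ball 0 t) := by
      refine ((h.diff N).mono hsub).div ((BP_diff (fun i => h.adm _) hs').mono hsub) ?_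
      intro x hx
      exact (hN x (by simpa using (mem_ball_zero_iff.1 hx).le)).2.1
    have hd2 : DifferentiableOn ℂ G (ball 0 t) := hd.congr fun x hx =>
      tendsto_nhds_unique (hlim x (hsub hx)) (hN x (mem_ball_zero_iff.1 hx).le).2.2
    exact (hd2.differentiableAt (isOpen_ball.mem_nhds (by simpa using h1))).differentiableWithinAt
  · intro z hz
    obtain ⟨t, h0, h1, h2⟩ := tt z hz
    obtain ⟨N, hN⟩ := key t h0 h2
    rw [tendsto_nhds_unique (hlim z hz) (hN z h1.le).2.2]
    exact div_ne_zero (hN z h1.le).1 (hN z h1.le).2.1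
  · intro z hz
    have h1 := (BP_tendsto h.adm hs (mem_ball_zero_iff.1 hz)).mul (hlim z hz)
    refine tendsto_nhds_unique (tendsto_const_nhds.congr fun n => ?_) h1
    have := h.prod 0 n hz
    simpa using this


def qq (a z : ℂ) : ℝ := (1 - ‖a‖) * ((1 - ‖a‖ ^ 2) / ‖z - a‖ ^ 2)

lemma qq_nonneg {a z : ℂ} (h : Adm a) : 0 ≤ qq a z := by
  have h1 : 0 ≤ 1 - ‖a‖ := by linarith [h.2]
  have h2 : 0 ≤ 1 - ‖a‖ ^ 2 := by nlinarith [h.1, h.2]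
  rw [qq]; positivity

lemma qq_lint {a : ℂ} (h : Adm a) :
    ∫⁻ θ in Ioc 0 (2 * π), ENNReal.ofReal (qq a (circleMap 0 1 θ)) ≤
      ENNReal.ofReal (2 * π * (1 - ‖a‖)) := by
  rcases h.2.lt_or_eq with h1 | h1
  · have hb : a ∈ ball (0:ℂ) 1 := by simpa using h1
    have hP := DiffContOnCl.circleAverage_poissonKernel_smul (f := fun _ : ℂ => (1:ℂ)) (R := 1)
      (c := 0) diffContOnCl_const hb
    have hne : ∀ θ : ℝ, circleMap 0 1 θ - a ≠ 0 := fun θ h0 => by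
      have := norm_circleMap_zero 1 θ
      rw [sub_eq_zero.1 h0] at this
      rw [this] at h1; simp at h1
    have hc : Continuous fun θ : ℝ => qq a (circleMap 0 1 θ) := by
      unfold qq
      refine continuous_const.mul (continuous_const.div ?_ ?_)
      · fun_prop
      · intro θ
        exact pow_ne_zero 2 (norm_ne_zero_iff.2 (hne θ))
    have hI : ∫ θ in (0:ℝ)..2 * π, qq a (circleMap 0 1 θ) = 2 * π * (1 - ‖a‖) := by
      have e1 : ∀ θ : ℝ, qq a (circleMap 0 1 θ) =
          (1 - ‖a‖) * poissonKernel 0 a (circleMap 0 1 θ) := by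
        intro θ
        rw [qq, poissonKernel_def]
        simp
      simp_rw [e1]
      rw [intervalIntegral.integral_const_mul]
      rw [Real.circleAverage] at hP
      have e2 : ∫ θ in (0:ℝ)..2 * π, (poissonKernel 0 a • fun _ : ℂ => (1:ℂ)) (circleMap 0 1 θ)
          = ((∫ θ in (0:ℝ)..2 * π, poissonKernel 0 a (circleMap 0 1 θ) : ℝ) : ℂ) := by
        rw [← intervalIntegral.integral_ofReal]
        congr 1; ext θ
        simp
      rw [e2] at hP
      have h3 : (2 * π)⁻¹ * (∫ θ in (0:ℝ)..2 * π, poissonKernel 0 a (circleMap 0 1 θ)) = 1 := by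
        have := congrArg Complex.re hP
        simpa using this
      have : (∫ θ in (0:ℝ)..2 * π, poissonKernel 0 a (circleMap 0 1 θ)) = 2 * π := by
        have hp := Real.two_pi_pos.ne'
        field_simp at h3
        linarith
      rw [this]; ring
    rw [← hI, intervalIntegral.integral_of_le Real.two_pi_pos.le,
      ofReal_integral_eq_lintegral_ofReal]
    · exact (hc.integrableOn_Icc).mono_set Ioc_subset_Icc_self
    · exact Eventually.of_forall fun θ => qq_nonneg h
  · simp [qq, h1]

lemma qq_meas (a : ℂ) : Measurable fun θ : ℝ => ENNReal.ofReal (qq a (circleMap 0 1 θ)) := by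
  unfold qq
  have : Measurable (circleMap 0 1) := (continuous_circleMap 0 1).measurable
  fun_prop

lemma ae_theta {a : ℕ → ℂ} (ha : ∀ n, Adm (a n)) (hs : Summable fun n => 1 - ‖a n‖) :
    ∀ᵐ θ ∂(volume.restrict (Ioc 0 (2 * π))), Summable fun n => qq (a n) (circleMap 0 1 θ) := by
  have h1 : ∫⁻ θ in Ioc 0 (2 * π), ∑' n, ENNReal.ofReal (qq (a n) (circleMap 0 1 θ)) ≠ ⊤ := by
    rw [lintegral_tsum fun n => (qq_meas (a n)).aemeasurable]
    refine ne_top_of_le_ne_top ?_ (ENNReal.tsum_le_tsum fun n => qq_lint (ha n))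
    rw [← ENNReal.ofReal_tsum_of_nonneg]
    · exact ENNReal.ofReal_ne_top
    · intro n
      have := (ha n).2
      have h3 := Real.two_pi_pos
      exact mul_nonneg h3.le (by linarith)
    · exact hs.mul_left _
  have h2 := ae_lt_top' (Measurable.aemeasurable (Measurable.tsum fun n => qq_meas (a n))) h1
  filter_upwards [h2] with θ hθ
  have := ENNReal.summable_toReal hθ.ne
  refine this.congr fun n => ?_
  rw [ENNReal.toReal_ofReal (qq_nonneg (ha n))]

lemma arcLen_null {S : Set ℝ} (h : volume S = 0) {T : Set ℂ} (hT : T.Countable)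
    {P : ℂ → Prop} (H : ∀ θ ∈ Ioc 0 (2 * π), θ ∉ S → circleMap 0 1 θ ∉ T → P (circleMap 0 1 θ)) :
    ∀ᵐ ξ ∂(arcLen (ball (0:ℂ) 1)), P ξ := by
  rw [arcLen, frontier_ball (0:ℂ) one_ne_zero, ae_restrict_iff' isClosed_sphere.measurableSet]
  have h1 : (μH[1] : Measure ℂ) (circleMap 0 1 '' S) = 0 := by
    have := (lipschitzWith_circleMap 0 1).hausdorffMeasure_image_le zero_le_one S
    rw [hausdorffMeasure_real, h, mul_zero] at this
    exact le_antisymm this (zero_le)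
  have h2 : (μH[1] : Measure ℂ) T = 0 := by
    have := Measure.nullSingletonClass_hausdorff ℂ (d := 1) one_pos
    exact hT.measure_zero _
  have h3 : ∀ᵐ ξ ∂(μH[1] : Measure ℂ), ξ ∉ circleMap 0 1 '' S := by
    rw [ae_iff]; simpa only [not_not, ofPred_mem_eq] using h1
  have h4 : ∀ᵐ ξ ∂(μH[1] : Measure ℂ), ξ ∉ T := by
    rw [ae_iff]; simpa using h2
  filter_upwards [h3, h4] with ξ h5 h6 h7
  have h8 := image_circleMap_Ioc (0:ℂ) 1
  rw [abs_one] at h8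
  rw [← h8] at h7
  obtain ⟨θ, hθ, rfl⟩ := h7
  exact H θ hθ (fun hS => h5 ⟨θ, hS, rfl⟩) h6

lemma x_le_q {a ξ : ℂ} (h : Adm a) (hξ : ‖ξ‖ = 1) (hne : ξ ≠ etaP a) (hq : qq a ξ < 1 / 4) :
    ((1 - ‖a‖) / ‖etaP a - ξ‖) ^ 2 ≤ 4 * qq a ξ := by
  rcases h.2.lt_or_eq with h1 | h1
  · have hX : 0 < ‖etaP a - ξ‖ := norm_pos_iff.2 (sub_ne_zero.2 hne.symm)
    have hea : ‖etaP a - a‖ = 1 - ‖a‖ := by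
      have : etaP a - a = (1 - (‖a‖:ℂ)) * etaP a := by
        conv_lhs => rw [← eta_mul h]
        have : ‖etaP a * (‖a‖:ℂ)‖ = ‖a‖ := by rw [eta_mul h]
        rw [eta_mul h]
        linear_combination eta_mul h
      rw [this, norm_mul, norm_c h, norm_eta h, mul_one]
    have hd : ‖ξ - a‖ ≤ ‖etaP a - ξ‖ + (1 - ‖a‖) := by
      have : ξ - a = -(etaP a - ξ) + (etaP a - a) := by ring
      rw [this]
      refine (norm_add_le _ _).trans ?_
      rw [norm_neg, hea]
    have hd0 : 0 < ‖ξ - a‖ := by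
      rw [norm_pos_iff, sub_ne_zero]
      rintro rfl
      linarith
    set X := ‖etaP a - ξ‖
    set D := ‖ξ - a‖
    set c := 1 - ‖a‖ with hc
    have hc0 : 0 < c := by linarith
    have hq1 : (c / (X + c)) ^ 2 ≤ qq a ξ := by
      rw [qq, div_pow, ← mul_div_assoc]
      apply div_le_div₀
      · have : 0 ≤ 1 - ‖a‖ ^ 2 := by nlinarith [h.1]
        positivity
      · nlinarith [h.1]
      · positivity
      · gcongr
    have h5 : c / (X + c) < 1 / 2 := by
      by_contra hcon
      push Not at hcon
      nlinarith
    rw [div_lt_iff₀ (by positivity)] at h5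
    have h6 : c / X ≤ 2 * (c / (X + c)) := by
      rw [← mul_div_assoc, div_le_div_iff₀ hX (by positivity)]
      nlinarith
    have h7 : 0 ≤ c / X := by positivity
    nlinarith
  · simp [h1, qq]

lemma ae_good {a : ℕ → ℂ} (ha : ∀ n, Adm (a n)) (hs : Summable fun n => 1 - ‖a n‖) :
    ∀ᵐ ξ ∂(arcLen (ball (0:ℂ) 1)), ‖ξ‖ = 1 ∧ (∀ n, ξ ≠ etaP (a n)) ∧
      Summable fun n => ((1 - ‖a n‖) / ‖etaP (a n) - ξ‖) ^ 2 := by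
  have h1 := ae_theta ha hs
  rw [ae_restrict_iff' measurableSet_Ioc, ae_iff] at h1
  refine arcLen_null h1 (countable_range fun n => etaP (a n)) fun θ hθ hS hT => ?_
  have hξ : ‖circleMap 0 1 θ‖ = 1 := by simp
  have hne : ∀ n, circleMap 0 1 θ ≠ etaP (a n) := fun n h0 => hT ⟨n, h0.symm⟩
  refine ⟨hξ, hne, ?_⟩
  have hsum : Summable fun n => qq (a n) (circleMap 0 1 θ) := by
    by_contra hcon
    exact hS (fun hh => hcon (hh hθ))
  refine Summable.of_norm_bounded_eventually_nat (hsum.mul_left 4) ?_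
  have := hsum.tendsto_atTop_zero.eventually (gt_mem_nhds (show (0:ℝ) < 1 / 4 by norm_num))
  filter_upwards [this] with n hn
  rw [Real.norm_of_nonneg (sq_nonneg _)]
  exact x_le_q (ha n) hξ (hne n) hn


def EE (a z : ℂ) : ℂ := bl a z * Complex.exp (kk a z)

lemma EE_bound {a z : ℂ} {Y : ℝ} (h : Adm a) (hz : ‖z‖ ≤ 1) (hne : etaP a ≠ z)
    (hY : 4 * ((1 - ‖a‖) / ‖etaP a - z‖) ≤ Y) : ‖EE a z - 1‖ ≤ 3 * Y ^ 2 * Real.exp Y := by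
  have hd : 0 < ‖etaP a - z‖ := norm_pos_iff.2 (sub_ne_zero.2 hne)
  have hh := den_half h hz
  have hd2 : 0 < ‖etaP a - (‖a‖:ℂ) * z‖ := by linarith
  have hn1 : etaP a - z ≠ 0 := sub_ne_zero.2 hne
  have hn2 : etaP a - (‖a‖:ℂ) * z ≠ 0 := norm_pos_iff.1 hd2
  have hc0 : 0 ≤ 1 - ‖a‖ := by linarith [h.2]
  have hnum := num_le h hz
  set y := (1 - ‖a‖) / ‖etaP a - z‖ with hy
  have hy0 : 0 ≤ y := by positivity
  have hc : 1 - ‖a‖ = y * ‖etaP a - z‖ := by rw [hy, div_mul_cancel₀ _ hd.ne']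
  have hk : ‖kk a z‖ ≤ 2 * y := by
    rw [kk, norm_div, norm_mul, norm_c h, div_le_iff₀ hd, hc]
    nlinarith [mul_nonneg hy0 hd.le]
  have hb : ‖bet a z‖ ≤ 4 * y := by
    rw [bet, norm_div, norm_mul, norm_c h, div_le_iff₀ hd2, hc]
    nlinarith [mul_nonneg hy0 hd.le, mul_nonneg hy0 hd2.le, mul_le_mul_of_nonneg_left hh hy0]
  have hkb : ‖kk a z - bet a z‖ ≤ 4 * y ^ 2 := by
    have e : kk a z - bet a z =
        (1 - (‖a‖:ℂ)) * (1 - (‖a‖:ℂ)) * (etaP a + z) * z /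
          ((etaP a - z) * (etaP a - (‖a‖:ℂ) * z)) := by
      rw [kk, bet]
      field_simp
      ring
    rw [e, norm_div, norm_mul, norm_mul, norm_mul, norm_mul, norm_c h, div_le_iff₀ (by positivity),
      hc]
    set d := ‖etaP a - z‖
    set d2 := ‖etaP a - (‖a‖:ℂ) * z‖
    calc y * d * (y * d) * ‖etaP a + z‖ * ‖z‖ ≤ y * d * (y * (2 * d2)) * 2 * 1 := by gcongr
      _ = 4 * y ^ 2 * (d * d2) := by ring
  have hY0 : 0 ≤ Y := by linarith
  have hk' : ‖kk a z‖ ≤ Y := by linarith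
  have hb' : ‖bet a z‖ ≤ Y := by linarith
  have hkb' : ‖kk a z - bet a z‖ ≤ Y ^ 2 := by nlinarith
  have e1 : ‖Complex.exp (kk a z) - 1‖ ≤ Y * Real.exp Y := by
    have := Complex.norm_exp_sub_sum_le_norm_mul_exp (kk a z) 1
    simp at this
    refine this.trans ?_
    gcongr
  have e2 : ‖Complex.exp (kk a z) - 1 - kk a z‖ ≤ Y ^ 2 * Real.exp Y := by
    have := Complex.norm_exp_sub_sum_le_norm_mul_exp (kk a z) 2
    simp [Finset.sum_range_succ] at this
    rw [← sub_sub] at this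
    refine this.trans ?_
    gcongr
  have e3 : EE a z - 1 = (Complex.exp (kk a z) - 1 - kk a z) + (kk a z - bet a z)
      - bet a z * (Complex.exp (kk a z) - 1) := by
    rw [EE, bl]; ring
  have e4 : ‖bet a z * (Complex.exp (kk a z) - 1)‖ ≤ Y * (Y * Real.exp Y) := by
    rw [norm_mul]; gcongr
  rw [e3]
  refine (norm_sub_le _ _).trans ?_
  have e5 := norm_add_le (Complex.exp (kk a z) - 1 - kk a z) (kk a z - bet a z)
  have e6 : 1 ≤ Real.exp Y := Real.one_le_exp hY0
  nlinarith [sq_nonneg Y]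

lemma EE_norm {a ξ : ℂ} (h : Adm a) (hξ : ‖ξ‖ = 1) (hne : etaP a ≠ ξ) : ‖EE a ξ‖ = 1 := by
  have hd : 0 < ‖etaP a - ξ‖ := norm_pos_iff.2 (sub_ne_zero.2 hne)
  have hh := den_half h hξ.le
  have hn2 : etaP a - (‖a‖:ℂ) * ξ ≠ 0 := norm_pos_iff.1 (by linarith)
  have h1 := norm_bl_sq h hn2
  rw [EE, norm_mul, Complex.norm_exp, kk_re h]
  simp only [hξ] at h1 ⊢
  have h2 : ‖bl a ξ‖ = 1 := by
    have : ‖bl a ξ‖ ^ 2 = 1 := by rw [h1]; simp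
    exact (pow_eq_one_iff_of_nonneg (norm_nonneg _) two_ne_zero).1 this
  simp [h2]

lemma EE_cont {a ξ : ℂ} (h : Adm a) (hξ : ‖ξ‖ = 1) (hne : etaP a ≠ ξ) : ContinuousAt (EE a) ξ := by
  have hd : 0 < ‖etaP a - ξ‖ := norm_pos_iff.2 (sub_ne_zero.2 hne)
  have hh := den_half h hξ.le
  have hn1 : etaP a - ξ ≠ 0 := sub_ne_zero.2 hne
  have hn2 : etaP a - (‖a‖:ℂ) * ξ ≠ 0 := norm_pos_iff.1 (by linarith)
  unfold EE bl bet kk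
  fun_prop (disch := assumption)

lemma BPE_eq {a : ℕ → ℂ} (ha : ∀ n, Adm (a n)) (hs : Summable fun n => 1 - ‖a n‖) {z : ℂ}
    (hz : ‖z‖ < 1) : BP a z * Complex.exp (KS a z) = ∏' n, EE (a n) z := by
  have h1 := (BP_hasProd ha hs hz).mul (summable_kk ha hs hz).hasSum.cexp
  exact h1.tprod_eq.symm

lemma NT_BPE {a : ℕ → ℂ} (ha : ∀ n, Adm (a n)) (hs : Summable fun n => 1 - ‖a n‖) (m : ℕ)
    {ξ : ℂ} (hξ : ‖ξ‖ = 1) (hne : ∀ n, ξ ≠ etaP (a n))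
    (hx : Summable fun n => ((1 - ‖a n‖) / ‖etaP (a n) - ξ‖) ^ 2) :
    ∃ L, NTLim (ball (0:ℂ) 1) (fun z => z ^ m * (BP a z * Complex.exp (KS a z))) ξ L ∧ ‖L‖ = 1 := by
  set x : ℕ → ℝ := fun n => (1 - ‖a n‖) / ‖etaP (a n) - ξ‖ with hxdef
  have hx0 : ∀ n, 0 ≤ x n := fun n => div_nonneg (by linarith [(ha n).2]) (norm_nonneg _)
  obtain ⟨X, hX⟩ : ∃ X, ∀ n, x n ≤ X := by
    refine ⟨1 + ∑' n, x n ^ 2, fun n => ?_⟩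
    have := hx.le_tsum n (fun j _ => sq_nonneg _)
    nlinarith [sq_nonneg (x n - 1), sq_nonneg (x n)]
  have hX0 : 0 ≤ X := (hx0 0).trans (hX 0)
  have bnd : ∀ C : ℝ, 0 ≤ C → ∀ z, ‖z‖ ≤ 1 → ∀ n, etaP (a n) ≠ z →
      ‖etaP (a n) - ξ‖ ≤ (1 + C) * ‖etaP (a n) - z‖ →
      ‖EE (a n) z - 1‖ ≤ 3 * (16 * (1 + C) ^ 2) * Real.exp (4 * (1 + C) * X) * x n ^ 2 := by
    intro C hC z hz n hn hle
    have hd : 0 < ‖etaP (a n) - z‖ := norm_pos_iff.2 (sub_ne_zero.2 hn)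
    have hd2 : 0 < ‖etaP (a n) - ξ‖ := norm_pos_iff.2 (sub_ne_zero.2 (hne n).symm)
    have h1 : (1 - ‖a n‖) / ‖etaP (a n) - z‖ ≤ (1 + C) * x n := by
      rw [hxdef]
      simp only
      rw [← mul_div_assoc, div_le_div_iff₀ hd hd2]
      have : 0 ≤ 1 - ‖a n‖ := by linarith [(ha n).2]
      nlinarith
    have h2 := EE_bound (ha n) hz hn (Y := 4 * (1 + C) * x n) (by linarith)
    refine h2.trans ?_
    have h3 : Real.exp (4 * (1 + C) * x n) ≤ Real.exp (4 * (1 + C) * X) := by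
      gcongr; exact hX n
    calc _ = 3 * (16 * (1 + C) ^ 2) * x n ^ 2 * Real.exp (4 * (1 + C) * x n) := by ring
      _ ≤ 3 * (16 * (1 + C) ^ 2) * x n ^ 2 * Real.exp (4 * (1 + C) * X) := by gcongr
      _ = _ := by ring
  refine ⟨ξ ^ m * ∏' n, EE (a n) ξ, ?_, ?_⟩
  · intro C hC
    set Fl := nhdsWithin ξ {z | z ∈ ball (0:ℂ) 1 ∧ dist z ξ ≤ C * infDist z (frontier (ball 0 1))}
    have hFl : Fl ≤ 𝓝 ξ := nhdsWithin_le_nhds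
    have hmem : ∀ᶠ z in Fl, ‖z‖ < 1 ∧ dist z ξ ≤ C * infDist z (frontier (ball 0 1)) := by
      filter_upwards [self_mem_nhdsWithin] with z hz
      exact ⟨by simpa using hz.1, hz.2⟩
    have hT : Tendsto (fun z => ∏' n, (1 + (EE (a n) z - 1))) Fl
        (𝓝 (∏' n, (1 + (EE (a n) ξ - 1)))) := by
      refine tendsto_tprod_one_add_of_dominated_convergence
        (hx.mul_left (3 * (16 * (1 + C) ^ 2) * Real.exp (4 * (1 + C) * X))) ?_ ?_
      · intro n
        exact ((EE_cont (ha n) hξ (hne n).symm).tendsto.mono_left hFl).sub_const 1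
      · filter_upwards [hmem] with z hz n
        have hnz : etaP (a n) ≠ z := by
          rintro rfl
          have := norm_eta (ha n)
          linarith [hz.1]
        refine bnd C (by linarith) z hz.1.le n hnz ?_
        have h1 : infDist z (frontier (ball 0 1)) ≤ dist z (etaP (a n)) := by
          apply infDist_le_dist_of_mem
          rw [frontier_ball (0:ℂ) one_ne_zero]
          simpa using norm_eta (ha n)
        have h2 := dist_triangle (etaP (a n)) z ξ
        rw [dist_comm z] at h1
        rw [dist_eq_norm, dist_eq_norm] at h2
        rw [dist_eq_norm] at h1
        have h3 := hz.2
        rw [dist_eq_norm] at h2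
        rw [dist_eq_norm] at h3
        nlinarith
    simp only [add_sub_cancel] at hT
    have hpow : Tendsto (fun z : ℂ => z ^ m) Fl (𝓝 (ξ ^ m)) :=
      ((continuous_pow m).tendsto ξ).mono_left hFl
    refine (hpow.mul hT).congr' ?_
    filter_upwards [hmem] with z hz
    rw [BPE_eq ha hs hz.1]
  · rw [norm_mul, norm_pow, hξ, one_pow, one_mul]
    have hm : Multipliable fun n => EE (a n) ξ := by
      have := multipliable_one_add_of_summable (f := fun n => EE (a n) ξ - 1)
        (Summable.of_nonneg_of_le (fun _ => norm_nonneg _)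
          (fun n => bnd 0 le_rfl ξ hξ.le n (hne n).symm (by simp)) (hx.mul_left _))
      simpa using this
    have h1 := hm.hasProd.tendsto_prod_nat.norm
    refine tendsto_nhds_unique h1 (tendsto_const_nhds.congr fun n => ?_)
    rw [norm_prod, Finset.prod_eq_one fun i _ => EE_norm (ha i) hξ (hne i).symm]


lemma log_exists {G : ℂ → ℂ} (hG : DifferentiableOn ℂ G (ball 0 1))
    (h0 : ∀ z ∈ ball (0:ℂ) 1, G z ≠ 0) :
    ∃ g, DifferentiableOn ℂ g (ball 0 1) ∧ ∀ z ∈ ball (0:ℂ) 1, G z = Complex.exp (g z) := by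
  have h1 : DifferentiableOn ℂ (fun z => deriv G z / G z) (ball 0 1) :=
    (hG.deriv isOpen_ball).div hG h0
  have hm : (0:ℂ) ∈ ball (0:ℂ) 1 := by simp
  obtain ⟨g, hg0, hg⟩ := (h1.isExactOn_ball).with_val_at 0 (Complex.log (G 0))
  have hgd : DifferentiableOn ℂ g (ball 0 1) := fun z hz =>
    (hg z hz).differentiableAt.differentiableWithinAt
  refine ⟨g, hgd, fun z hz => ?_⟩
  have hder : ∀ x ∈ ball (0:ℂ) 1, HasDerivAt (fun z => G z * Complex.exp (-g z)) 0 x := by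
    intro x hx
    have d1 := (hG.differentiableAt (isOpen_ball.mem_nhds hx)).hasDerivAt
    have d2 := d1.mul (hg x hx).neg.cexp
    have e : deriv G x * Complex.exp ((-g) x) + G x * (Complex.exp ((-g) x) * -(deriv G x / G x))
        = 0 := by
      have := h0 x hx
      field_simp
      ring
    rw [e] at d2
    exact d2
  have hconst := isOpen_ball.is_const_of_deriv_eq_zero (convex_ball (0:ℂ) 1).isPreconnected
    (fun x hx => (hder x hx).differentiableAt.differentiableWithinAt)
    (fun x hx => (hder x hx).deriv) hz hm
  rw [hg0, Complex.exp_neg (Complex.log _), Complex.exp_log (h0 0 hm), mul_inv_cancel₀ (h0 0 hm),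
    Complex.exp_neg] at hconst
  field_simp at hconst
  exact hconst

lemma core {Ω : Set ℂ} (hΩ : IsOpen Ω) {u : ℂ → ℝ} (hu : IsExhaustion u Ω)
    {ν : Measure ℂ} (hν : IsRieszMeasure u Ω ν) (hfin : ν univ < ⊤)
    {μfam : ℝ → Measure ℂ} (hμ : ∀ r : ℝ, r < 0 → IsMAMeasure u Ω ν r (μfam r))
    {z0 : ℂ} (hz0 : z0 ∈ Ω) {ψ τ : ℂ → ℂ} (hψ : DifferentiableOn ℂ ψ (ball 0 1))
    (hψm : ∀ w ∈ ball (0:ℂ) 1, ψ w ∈ Ω) (hτ : DifferentiableOn ℂ τ Ω)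
    (hτm : ∀ z ∈ Ω, τ z ∈ ball (0:ℂ) 1) (hψτ : ∀ z ∈ Ω, ψ (τ z) = z)
    {p : ℝ} (hp : 0 < p) {f : ℂ → ℂ} (hf : MemPS p Ω μfam f) (hf0 : ∃ z ∈ Ω, f z ≠ 0) :
    ∃ (m : ℕ) (a : ℕ → ℂ) (G : ℂ → ℂ) (M : ℝ≥0∞), (∀ n, Adm (a n)) ∧
      Summable (fun n => 1 - ‖a n‖) ∧ DifferentiableOn ℂ G (ball 0 1) ∧
      (∀ z ∈ ball (0:ℂ) 1, G z ≠ 0) ∧ (∀ z ∈ Ω, f z = (τ z) ^ m * (BP a (τ z) * G (τ z))) ∧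
      M < ⊤ ∧ ∀ r, u z0 < r → r < 0 →
        ∫⁻ z, ENNReal.ofReal (‖G (τ z)‖ ^ p) ∂(μfam r) ≤ M := by
  have hfψ : DifferentiableOn ℂ (f ∘ ψ) (ball 0 1) := hf.1.comp hψ hψm
  obtain ⟨m, f0, hf0d, hf00, hfac⟩ := zero_order hfψ (by
    obtain ⟨z, hz, hne⟩ := hf0
    exact ⟨τ z, hτm z hz, by simpa [hψτ z hz] using hne⟩)
  obtain ⟨a, F, hF0, hB⟩ := exists_bseq hf0d hf00
  have hfe : ∀ z ∈ Ω, f z = (τ z) ^ m * F 0 (τ z) := by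
    intro z hz
    have := hfac (τ z)
    rw [Function.comp_apply, hψτ z hz] at this
    rw [this, hF0]
  obtain ⟨M, hM, hbd⟩ := bound_ps hΩ hu hν hfin hμ hz0 hp hf.2
  have hbn : ∀ n r, u z0 < r → r < 0 →
      ∫⁻ z, ENNReal.ofReal (‖F n (τ z)‖ ^ p) ∂(μfam r) ≤ M := by
    intro n
    refine hbd (fun z => F n (τ z)) ((hB.diff n).comp hτ hτm) ?_
    obtain ⟨t, ht1, ht⟩ := hB.boundary m n
    have hsub : closedBall (0:ℂ) t ⊆ ball 0 1 := closedBall_subset_ball ht1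
    refine ⟨ψ '' closedBall 0 t, (isCompact_closedBall _ _).image_of_continuousOn
      (hψ.continuousOn.mono hsub), ?_, ?_⟩
    · rintro _ ⟨w, hw, rfl⟩
      exact hψm w (hsub hw)
    · intro z hz hzn
      have h1 : t ≤ ‖τ z‖ := by
        by_contra hcon
        push Not at hcon
        exact hzn ⟨τ z, by simpa using hcon.le, hψτ z hz⟩
      rw [hfe z hz]
      exact ht _ h1 (by simpa using hτm z hz)
  have hneg := hu.neg z0 hz0
  obtain ⟨K, hK, hKΩ, hKpos⟩ := mu_pos hΩ hu hν hfin (r := u z0 / 2) (by linarith) hz0 (by linarith)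
    (hμ _ (by linarith))
  obtain ⟨t, ht0, ht1, ht⟩ := compact_sub_disc (hK.image_of_continuousOn (hτ.continuousOn.mono hKΩ))
    (by rintro _ ⟨z, hz, rfl⟩; exact hτm z (hKΩ hz))
  have hs : Summable fun n => 1 - ‖a n‖ := by
    refine hB.summable (M := ((M / μfam (u z0 / 2) K).toReal) ^ (1 / p)) ht0 ht1 fun n c hc => ?_
    rcases le_or_gt c 0 with hc0 | hc0
    · exact hc0.trans (by positivity)
    have h1 : ENNReal.ofReal (c ^ p) * μfam (u z0 / 2) K ≤ M := by
      refine le_trans ?_ (hbn n (u z0 / 2) (by linarith) (by linarith))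
      rw [← setLIntegral_const]
      refine le_trans ?_ (setLIntegral_le_lintegral K _)
      refine setLIntegral_mono' hK.measurableSet fun z hz => ?_
      gcongr
      exact hc _ (ht _ ⟨z, hz, rfl⟩)
    have h2 : ENNReal.ofReal (c ^ p) ≤ M / μfam (u z0 / 2) K := by
      rw [ENNReal.le_div_iff_mul_le (Or.inl hKpos.ne') (Or.inr hM.ne)]
      exact h1
    have h3 : M / μfam (u z0 / 2) K ≠ ⊤ := ENNReal.div_ne_top hM.ne hKpos.ne'
    have h4 : c ^ p ≤ (M / μfam (u z0 / 2) K).toReal := (ENNReal.ofReal_le_iff_le_toReal h3).1 h2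
    calc c = (c ^ p) ^ (1 / p) := by
          rw [← Real.rpow_mul hc0.le, mul_one_div_cancel hp.ne', Real.rpow_one]
      _ ≤ _ := by gcongr
  obtain ⟨G, hGd, hG0, hGlim, hGfac⟩ := hB.limit hs
  refine ⟨m, a, G, M, hB.adm, hs, hGd, hG0, ?_, hM, ?_⟩
  · intro z hz
    rw [hfe z hz, hGfac _ (hτm z hz)]
  · intro r hr0 hr
    have hsupp := mu_supp hΩ hu hν hfin hr hz0 hr0 (hμ r hr)
    have hres : (μfam r).restrict Ω = μfam r :=
      Measure.restrict_eq_self_of_ae_mem (hsupp.mono fun z hz => hz.1)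
    have e1 : ∀ᵐ z ∂(μfam r), ENNReal.ofReal (‖G (τ z)‖ ^ p) =
        liminf (fun n => ENNReal.ofReal (‖F n (τ z)‖ ^ p)) atTop := by
      filter_upwards [hsupp] with z hz
      refine (Tendsto.liminf_eq ?_).symm
      refine ENNReal.tendsto_ofReal ?_
      exact ((hGlim _ (hτm z hz.1)).norm).rpow_const (Or.inr hp.le)
    rw [lintegral_congr_ae e1]
    refine (lintegral_liminf_le' fun n => ?_).trans ?_
    · rw [← hres]
      refine ENNReal.measurable_ofReal.comp_aemeasurable ?_
      refine (ContinuousOn.aemeasurable ?_ hΩ.measurableSet)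
      exact (((hB.diff n).comp hτ hτm).continuousOn.norm).rpow_const fun _ _ => Or.inr hp.le
    · refine (liminf_le_liminf (Eventually.of_forall fun n => hbn n r hr0 hr)).trans ?_
      simp

lemma memPS_two {Ω : Set ℂ} (hΩ : IsOpen Ω) {u : ℂ → ℝ} (hu : IsExhaustion u Ω)
    {ν : Measure ℂ} (hν : IsRieszMeasure u Ω ν) (hfin : ν univ < ⊤)
    {μfam : ℝ → Measure ℂ} (hμ : ∀ r : ℝ, r < 0 → IsMAMeasure u Ω ν r (μfam r))
    {z0 : ℂ} (hz0 : z0 ∈ Ω) {b : ℂ → ℝ} {M : ℝ≥0∞} (hM : M < ⊤)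
    (hb : ∀ r, u z0 < r → r < 0 → ∫⁻ z, ENNReal.ofReal (b z) ∂(μfam r) ≤ M)
    {φ : ℂ → ℂ} (hφ : DifferentiableOn ℂ φ Ω) (hle : ∀ z ∈ Ω, ‖φ z‖ ^ 2 ≤ b z) :
    MemPS 2 Ω μfam φ := by
  refine ⟨hφ, lt_of_le_of_lt ?_ hM⟩
  refine limsup_le_of_le (by isBoundedDefault) ?_
  have h1 : Ioo (u z0) 0 ∈ 𝓝[<] (0:ℝ) := Ioo_mem_nhdsLT (hu.neg z0 hz0)
  filter_upwards [h1] with r hr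
  refine le_trans (lintegral_mono_ae ?_) (hb r hr.1 hr.2)
  filter_upwards [mu_supp hΩ hu hν hfin hr.2 hz0 hr.1 (hμ r hr.2)] with z hz
  refine ENNReal.ofReal_le_ofReal ?_
  have := hle z hz.1
  rwa [Real.rpow_ofNat]

/-- For `f ∈ H^p_u(Ω)`, `f ≢ 0`, there are an `Ω`-inner `I` and a
zero-free `h ∈ H²_u(Ω)` with `f = I·h^{2/p}` (the power taken via a holomorphic
logarithm `g`, `h = exp((p/2)g)` and `h^{2/p} = exp g`). In particular for `p = 1`,
`f` is a product of two functions in `H²_u(Ω)`. -/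
theorem stmt12 (Ω : Set ℂ) (hΩ : AnalyticJordanDomain Ω)
    (u : ℂ → ℝ) (hu : IsExhaustion u Ω)
    (ν : Measure ℂ) (hν : IsRieszMeasure u Ω ν) (hfin : ν Set.univ < ⊤)
    (μfam : ℝ → Measure ℂ) (hμ : ∀ r : ℝ, r < 0 → IsMAMeasure u Ω ν r (μfam r))
    (ψ : ℂ → ℂ) (hψ : IsConformalOnto ψ Ω)
    (p : ℝ) (hp : 1 ≤ p)
    (f : ℂ → ℂ) (hf : MemPS p Ω μfam f) (hf0 : ∃ z ∈ Ω, f z ≠ 0) :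
    (∃ I h g : ℂ → ℂ,
      OmegaInner Ω ψ I ∧
      MemPS 2 Ω μfam h ∧ (∀ z ∈ Ω, h z ≠ 0) ∧
      DifferentiableOn ℂ g Ω ∧
      (∀ z ∈ Ω, h z = Complex.exp (((p:ℂ)/2) * g z)) ∧
      (∀ z ∈ Ω, f z = I z * Complex.exp (g z))) ∧
    (p = 1 → ∃ g h : ℂ → ℂ,
      MemPS 2 Ω μfam g ∧ MemPS 2 Ω μfam h ∧ ∀ z ∈ Ω, f z = g z * h z) := by
  have hp0 : 0 < p := by linarith
  have hO := hΩ.isOpen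
  have hz0 := hΩ.zero_mem
  obtain ⟨τ, hτ, hτm, hψτ, hτψ⟩ := conf_inv hψ hO
  have hψm : ∀ w ∈ ball (0:ℂ) 1, ψ w ∈ Ω := fun w hw => by
    rw [← hψ.2.2.1]; exact ⟨w, hw, rfl⟩
  obtain ⟨m, a, G, M, ha, hs, hGd, hG0, hfac, hM, hbd⟩ :=
    core hO hu hν hfin hμ hz0 hψ.1 hψm hτ hτm hψτ hp0 hf hf0
  obtain ⟨g1, hg1, hGe⟩ := log_exists hGd hG0
  have hτn : ∀ z ∈ Ω, ‖τ z‖ < 1 := fun z hz => by simpa using hτm z hz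
  have dKS : DifferentiableOn ℂ (fun z => KS a (τ z)) Ω := (KS_diff ha hs).comp hτ hτm
  have dBP : DifferentiableOn ℂ (fun z => BP a (τ z)) Ω := (BP_diff ha hs).comp hτ hτm
  have dg1 : DifferentiableOn ℂ (fun z => g1 (τ z)) Ω := hg1.comp hτ hτm
  have hGn : ∀ z ∈ Ω, ‖G (τ z)‖ = Real.exp (g1 (τ z)).re := fun z hz => by
    rw [hGe _ (hτm z hz), Complex.norm_exp]
  have dg : DifferentiableOn ℂ (fun z => g1 (τ z) - KS a (τ z)) Ω := dg1.sub dKS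
  refine ⟨⟨fun z => (τ z) ^ m * (BP a (τ z) * Complex.exp (KS a (τ z))),
    fun z => Complex.exp (((p:ℂ)/2) * (g1 (τ z) - KS a (τ z))),
    fun z => g1 (τ z) - KS a (τ z), ⟨?_, ?_⟩, ?_, ?_, dg, fun _ _ => rfl, ?_⟩, ?_⟩
  · exact (hτ.pow m).mul (dBP.mul dKS.cexp)
  · filter_upwards [ae_good ha hs] with ξ hξ
    obtain ⟨L, hL, hL1⟩ := NT_BPE ha hs m hξ.1 hξ.2.1 hξ.2.2
    refine ⟨L, fun C hC => (hL C hC).congr' ?_, hL1⟩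
    filter_upwards [self_mem_nhdsWithin] with z hz
    simp only [Function.comp_apply]
    rw [hτψ z hz.1]
  · refine memPS_two hO hu hν hfin hμ hz0 hM hbd ((dg.const_mul _).cexp) fun z hz => ?_
    rw [hGn z hz, Complex.norm_exp, ← Real.exp_mul, ← Real.exp_nat_mul]
    apply Real.exp_le_exp.2
    have h1 := KS_re ha hs (hτn z hz)
    have h2 : ((p:ℂ)/2) = ((p / 2 : ℝ) : ℂ) := by push_cast; rfl
    rw [h2, Complex.re_ofReal_mul, Complex.sub_re]
    push_cast
    nlinarith
  · intro z _
    exact Complex.exp_ne_zero _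
  · intro z hz
    rw [hfac z hz, hGe _ (hτm z hz), Complex.exp_sub]
    have := Complex.exp_ne_zero (KS a (τ z))
    field_simp
  · rintro rfl
    simp only [Real.rpow_one] at hbd
    have dh : DifferentiableOn ℂ (fun z => Complex.exp (g1 (τ z) / 2)) Ω := (dg1.div_const 2).cexp
    have hre : ∀ z, ‖Complex.exp (g1 z / 2)‖ ^ 2 = Real.exp (g1 z).re := by
      intro z
      rw [Complex.norm_exp, ← Real.exp_nat_mul]
      congr 1
      have : (g1 z / 2).re = (g1 z).re / 2 := by simp
      rw [this]; push_cast; ring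
    refine ⟨fun z => (τ z) ^ m * (BP a (τ z) * Complex.exp (g1 (τ z) / 2)),
      fun z => Complex.exp (g1 (τ z) / 2), ?_, ?_, ?_⟩
    · refine memPS_two hO hu hν hfin hμ hz0 hM hbd ((hτ.pow m).mul (dBP.mul dh)) fun z hz => ?_
      have h1 := norm_BP_le ha hs (hτn z hz)
      have h2 : ‖τ z‖ ^ m ≤ 1 := pow_le_one₀ (norm_nonneg _) (hτn z hz).le
      rw [norm_mul, norm_mul, norm_pow, ← mul_assoc, mul_pow, hre, hGn z hz]
      have h3 : (‖τ z‖ ^ m * ‖BP a (τ z)‖) ^ 2 ≤ 1 :=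
        pow_le_one₀ (by positivity) (mul_le_one₀ h2 (norm_nonneg _) h1)
      exact mul_le_of_le_one_left (Real.exp_pos _).le h3
    · refine memPS_two hO hu hν hfin hμ hz0 hM hbd dh fun z hz => ?_
      rw [hre, hGn z hz]
    · intro z hz
      rw [hfac z hz, hGe _ (hτm z hz), mul_assoc, mul_assoc, ← Complex.exp_add, add_halves]

end
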